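/- arXiv:math/0406264 — 5 statements merged into one kernel-verified Lean document; each statement's English description precedes it below -/
import Mathlib

section
/- There exist a constant c > 0 and a natural number n₀ such that for every n ≥ n₀, every real normed vector space X of finite dimension n contains an equilateral set S with card S ≥ c · (log n)^(1/3). -/
section Conc
open MeasureTheory ProbabilityTheory

variable {E : Type*} [NormedAddCommGroup E] [InnerProductSpace ℝ E] [FiniteDimensional ℝ E]
  [MeasurableSpace E] [BorelSpace E] {X : Type*} [NormedAddCommGroup X] [NormedSpace ℝ X]

lemma bd_mgf_dual (φ : StrongDual ℝ E) :
    ∫⁻ x, ENNReal.ofReal (Real.exp (φ x)) ∂(stdGaussian E) = ENNReal.ofReal (Real.exp (‖φ‖ ^ 2 / 2)) := by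
  have h := IsGaussian.map_eq_gaussianReal (μ := stdGaussian E) φ
  rw [integral_strongDual_stdGaussian, variance_dual_stdGaussian] at h
  have h1 := mgf_gaussianReal h 1
  have hi : Integrable (fun x => Real.exp (φ x)) (stdGaussian E) := by
    have := integrable_exp_mul_gaussianReal (μ := 0) (v := (‖φ‖ ^ 2).toNNReal) 1
    rw [← h] at this
    have := this.comp_measurable (φ.continuous.measurable)
    simpa [Function.comp_def] using this
  rw [← ofReal_integral_eq_lintegral_ofReal hi (Filter.Eventually.of_forall fun x => (Real.exp_pos _).le)]
  congr 1
  simpa [mgf] using h1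

lemma bd_integrable_exp (L : E →L[ℝ] X) (c : ℝ) :
    Integrable (fun x => Real.exp (c * ‖L x‖)) (stdGaussian E) := by
  obtain ⟨C, hC, hi⟩ := IsGaussian.exists_integrable_exp_sq (stdGaussian E)
  have hm : Continuous (fun x => Real.exp (c * ‖L x‖)) := by fun_prop
  refine Integrable.mono' (hi.const_mul (Real.exp ((c * ‖L‖) ^ 2 / (4 * C)))) 
    hm.aestronglyMeasurable (Filter.Eventually.of_forall fun x => ?_)
  rw [Real.norm_eq_abs, abs_of_pos (Real.exp_pos _), ← Real.exp_add]
  apply Real.exp_le_exp.2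
  have h1 : c * ‖L x‖ ≤ |c| * (‖L‖ * ‖x‖) := by
    have := L.le_opNorm x
    calc c * ‖L x‖ ≤ |c| * ‖L x‖ := by gcongr; exact le_abs_self c
      _ ≤ _ := by gcongr
  have h2 : (c * ‖L‖) ^ 2 / (4 * C) = (|c| * ‖L‖) ^ 2 / (4 * C) := by
    rw [mul_pow, mul_pow, sq_abs]
  have h3 : 0 ≤ (|c| * ‖L‖ - 2 * C * ‖x‖) ^ 2 / (4 * C) := by positivity
  have h4 : (|c| * ‖L‖ - 2 * C * ‖x‖) ^ 2 / (4 * C) = (|c| * ‖L‖) ^ 2 / (4 * C) + C * ‖x‖ ^ 2 - |c| * (‖L‖ * ‖x‖) := by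
    field_simp; ring
  rw [h2]; linarith

lemma bd_step (L : E →L[ℝ] X) {b : ℝ} (hL : ‖L‖ ≤ b) {l : ℝ} (hl : 0 ≤ l) (h : ℝ) :
    ∫⁻ z, ENNReal.ofReal (Real.exp (l * (‖L z.1‖ - ‖L (Real.cos h • z.1 + Real.sin h • z.2)‖)))
      ∂((stdGaussian E).prod (stdGaussian E)) ≤
    (∫⁻ x, ENNReal.ofReal (Real.exp (l * (1 - Real.cos h) * ‖L x‖)) ∂(stdGaussian E)) *
      ENNReal.ofReal (Real.exp ((l * Real.sin h * b) ^ 2 / 2)) := by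
  have hm : Continuous (fun z : E × E => Real.exp (l * (‖L z.1‖ - ‖L (Real.cos h • z.1 + Real.sin h • z.2)‖))) := by
    fun_prop
  rw [lintegral_prod _ (by fun_prop)]
  have hm2 : Measurable (fun x : E => ENNReal.ofReal (Real.exp (l * (1 - Real.cos h) * ‖L x‖))) := by
    have : Continuous (fun x : E => (Real.exp (l * (1 - Real.cos h) * ‖L x‖))) := by fun_prop
    exact this.measurable.ennreal_ofReal
  rw [← lintegral_mul_const _ hm2]
  apply lintegral_mono
  intro x
  obtain ⟨g, hg1, hg2⟩ := exists_dual_vector'' ℝ (L x)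
  set φ : StrongDual ℝ E := (-(l * Real.sin h)) • (g.comp L) with hφ
  have hφn : ‖φ‖ ^ 2 ≤ (l * Real.sin h * b) ^ 2 := by
    rw [hφ, norm_smul, mul_pow, mul_pow]
    simp only [norm_neg, Real.norm_eq_abs, sq_abs]
    have : ‖g.comp L‖ ≤ b := by
      calc ‖g.comp L‖ ≤ ‖g‖ * ‖L‖ := ContinuousLinearMap.opNorm_comp_le _ _
        _ ≤ 1 * ‖L‖ := by gcongr
        _ ≤ b := by linarith
    gcongr
  calc ∫⁻ y, ENNReal.ofReal (Real.exp (l * (‖L x‖ - ‖L (Real.cos h • x + Real.sin h • y)‖))) ∂(stdGaussian E)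
      ≤ ∫⁻ y, ENNReal.ofReal (Real.exp (l * (1 - Real.cos h) * ‖L x‖)) * ENNReal.ofReal (Real.exp (φ y)) ∂(stdGaussian E) := by
        apply lintegral_mono
        intro y
        simp only
        rw [← ENNReal.ofReal_mul (Real.exp_pos _).le, ← Real.exp_add]
        apply ENNReal.ofReal_le_ofReal
        apply Real.exp_le_exp.2
        have h1 : g (L (Real.cos h • x + Real.sin h • y)) ≤ ‖L (Real.cos h • x + Real.sin h • y)‖ := by
          refine (le_abs_self _).trans ((g.le_opNorm _).trans ?_)
          nlinarith [norm_nonneg (L (Real.cos h • x + Real.sin h • y))]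
        have h2 : g (L (Real.cos h • x + Real.sin h • y)) = Real.cos h * ‖L x‖ + Real.sin h * g (L y) := by
          simp [hg2]
        have h3 : φ y = -(l * Real.sin h) * g (L y) := by simp [hφ]
        rw [h3]
        rw [h2] at h1
        nlinarith
    _ = ENNReal.ofReal (Real.exp (l * (1 - Real.cos h) * ‖L x‖)) * ENNReal.ofReal (Real.exp (‖φ‖ ^ 2 / 2)) := by
        rw [lintegral_const_mul' _ _ ENNReal.ofReal_ne_top, bd_mgf_dual]
    _ ≤ _ := by
        refine mul_le_mul' le_rfl (ENNReal.ofReal_le_ofReal (Real.exp_le_exp.2 ?_))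
        linarith

lemma bd_tele (L : E →L[ℝ] X) {l : ℝ} (N : ℕ) (hN : 0 < N) :
    ∫⁻ z, ENNReal.ofReal (Real.exp (l * (‖L z.1‖ - ‖L z.2‖))) ∂((stdGaussian E).prod (stdGaussian E)) ≤
    ∫⁻ z, ENNReal.ofReal (Real.exp ((l * N) * (‖L z.1‖ - ‖L (Real.cos (Real.pi / (2 * N)) • z.1 + Real.sin (Real.pi / (2 * N)) • z.2)‖)))
      ∂((stdGaussian E).prod (stdGaussian E)) := by
  set h := Real.pi / (2 * N) with hh
  have hN' : (0:ℝ) < N := by exact_mod_cast hN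
  set D : E × E → ℝ := fun z => Real.exp ((l * N) * (‖L z.1‖ - ‖L (Real.cos h • z.1 + Real.sin h • z.2)‖)) with hD
  have hDm : Continuous D := by fun_prop
  have hrot : ∀ θ : ℝ, ∫⁻ z, ENNReal.ofReal (D (ContinuousLinearMap.rotation θ z)) ∂((stdGaussian E).prod (stdGaussian E))
      = ∫⁻ z, ENNReal.ofReal (D z) ∂((stdGaussian E).prod (stdGaussian E)) := by
    intro θ
    have := IsGaussian.map_rotation_eq_self (μ := stdGaussian E) (by simp) θ
    conv_rhs => rw [← this]
    rw [lintegral_map (by fun_prop) (by fun_prop)]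
  have key : ∀ z : E × E, Real.exp (l * (‖L z.1‖ - ‖L z.2‖)) ≤
      ∑ i ∈ Finset.range N, (1 / N : ℝ) * D (ContinuousLinearMap.rotation (i * h) z) := by
    intro z
    set F : ℕ → ℝ := fun i => ‖L (Real.cos (i * h) • z.1 + Real.sin (i * h) • z.2)‖ with hF
    have e1 : l * (‖L z.1‖ - ‖L z.2‖) = ∑ i ∈ Finset.range N, (1 / N : ℝ) • ((l * N) * (F i - F (i+1))) := by
      simp only [smul_eq_mul]
      rw [← Finset.mul_sum, ← Finset.mul_sum, Finset.sum_range_sub']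
      have : (N:ℝ) * h = Real.pi / 2 := by rw [hh]; field_simp
      simp [hF, this]
      field_simp
    rw [e1]
    refine (convexOn_exp.map_sum_le (by intros; positivity) (by simp; field_simp) (by simp)).trans ?_
    apply Finset.sum_le_sum
    intro i _
    simp only [smul_eq_mul]
    gcongr
    simp only [hD, hF, ContinuousLinearMap.rotation_apply]
    have hv : Real.cos (((i + 1 : ℕ) : ℝ) * h) • z.1 + Real.sin (((i + 1 : ℕ) : ℝ) * h) • z.2 =
        Real.cos h • (Real.cos (i * h) • z.1 + Real.sin (i * h) • z.2) +
          Real.sin h • (-Real.sin (i * h) • z.1 + Real.cos (i * h) • z.2) := by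
      push_cast
      rw [add_mul, one_mul, Real.cos_add, Real.sin_add]
      module
    rw [hv]
  calc _ ≤ ∫⁻ z, ∑ i ∈ Finset.range N, ENNReal.ofReal (1 / N : ℝ) * ENNReal.ofReal (D (ContinuousLinearMap.rotation (i * h) z)) ∂((stdGaussian E).prod (stdGaussian E)) := by
        apply lintegral_mono
        intro z
        simp only
        refine (ENNReal.ofReal_le_ofReal (key z)).trans ?_
        rw [ENNReal.ofReal_sum_of_nonneg]
        · apply Finset.sum_le_sum
          intro i _
          rw [ENNReal.ofReal_mul (by positivity)]
        · intro i _
          have : 0 < D (ContinuousLinearMap.rotation (i * h) z) := Real.exp_pos _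
          positivity
    _ = ∑ i ∈ Finset.range N, ENNReal.ofReal (1 / N : ℝ) * ∫⁻ z, ENNReal.ofReal (D z) ∂((stdGaussian E).prod (stdGaussian E)) := by
        rw [lintegral_finsetSum _ (by intro i _; fun_prop)]
        apply Finset.sum_congr rfl
        intro i _
        rw [lintegral_const_mul' _ _ ENNReal.ofReal_ne_top, hrot]
    _ = _ := by
        rw [Finset.sum_const, Finset.card_range, nsmul_eq_mul, ← mul_assoc]
        rw [← ENNReal.ofReal_natCast, ← ENNReal.ofReal_mul (by positivity)]
        rw [mul_one_div_cancel hN'.ne', ENNReal.ofReal_one, one_mul]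

lemma bd_mgf (L : E →L[ℝ] X) {b : ℝ} (hL : ‖L‖ ≤ b) {l : ℝ} (hl : 0 ≤ l) :
    ∫⁻ z, ENNReal.ofReal (Real.exp (l * (‖L z.1‖ - ‖L z.2‖))) ∂((stdGaussian E).prod (stdGaussian E)) ≤
    ENNReal.ofReal (Real.exp (2 * l ^ 2 * b ^ 2)) := by
  set K := ∫ x, Real.exp (2 * l * ‖L x‖) ∂(stdGaussian E) with hK
  have hKi := bd_integrable_exp L (2 * l)
  have hK0 : 0 ≤ K := integral_nonneg fun x => (Real.exp_pos _).le
  have main : ∀ N : ℕ, 0 < N → 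
    ∫⁻ z, ENNReal.ofReal (Real.exp (l * (‖L z.1‖ - ‖L z.2‖))) ∂((stdGaussian E).prod (stdGaussian E)) ≤
     ENNReal.ofReal ((1 + (1/(N:ℝ)) * K) * Real.exp (2 * l ^ 2 * b ^ 2)) := by
    intro N hN
    have hN' : (1:ℝ) ≤ N := by exact_mod_cast hN
    refine (bd_tele L N hN).trans ((bd_step L hL (by positivity) _).trans ?_)
    set h := Real.pi / (2 * N) with hh
    have hπ := Real.pi_lt_four
    have hπ' := Real.pi_pos
    have hh0 : 0 < h := by positivity
    have hNh : N * h = Real.pi / 2 := by rw [hh]; field_simp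
    rw [ENNReal.ofReal_mul (by positivity)]
    gcongr
    · have hint : Integrable (fun x => 1 + 1 / (N:ℝ) * Real.exp (2 * l * ‖L x‖)) (stdGaussian E) :=
        (integrable_const (1:ℝ)).add (hKi.const_mul _)
      rw [show 1 + 1 / (N:ℝ) * K = ∫ x, (1 + 1 / (N:ℝ) * Real.exp (2 * l * ‖L x‖)) ∂(stdGaussian E) by
        rw [integral_add (by fun_prop) (hKi.const_mul _), integral_const_mul]; simp [hK]]
      rw [ofReal_integral_eq_lintegral_ofReal hint (Filter.Eventually.of_forall fun x => by simp only [Pi.zero_apply]; positivity)]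
      apply lintegral_mono
      intro x
      apply ENNReal.ofReal_le_ofReal
      have hc := Real.one_sub_sq_div_two_le_cos (x := h)
      have h1 : l * N * (1 - Real.cos h) ≤ 1 / N * (2 * l) := by
        have : N * (1 - Real.cos h) ≤ 2 / N := by
          calc N * (1 - Real.cos h) ≤ N * (h ^ 2 / 2) := by gcongr; linarith
            _ = (N * h) ^ 2 / 2 / N := by field_simp
            _ ≤ 2 / N := by
              rw [hNh]; gcongr; nlinarith
        calc l * N * (1 - Real.cos h) = l * (N * (1 - Real.cos h)) := by ring
          _ ≤ l * (2 / N) := by gcongr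
          _ = _ := by ring
      have h2 : Real.exp (l * N * (1 - Real.cos h) * ‖L x‖) ≤ Real.exp ((1 - 1 / (N:ℝ)) • 0 + (1/(N:ℝ)) • (2 * l * ‖L x‖)) := by
        apply Real.exp_le_exp.2
        simp only [smul_eq_mul, mul_zero, zero_add]
        calc l * N * (1 - Real.cos h) * ‖L x‖ ≤ 1 / N * (2 * l) * ‖L x‖ := by gcongr
          _ = _ := by ring
      have h3 : 1 / (N:ℝ) ≤ 1 := by rw [div_le_one (by positivity)]; exact hN'
      have h4 : 0 < 1 / (N:ℝ) := by positivity
      have h5 := convexOn_exp.2 (Set.mem_univ 0) (Set.mem_univ (2 * l * ‖L x‖)) (by linarith : 0 ≤ 1 - 1 / (N:ℝ)) h4.le (by ring)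
      refine h2.trans (h5.trans ?_)
      simp only [smul_eq_mul, Real.exp_zero, mul_one]
      linarith
    · have hs : Real.sin h ≤ h := Real.sin_le hh0.le
      have hs0 : 0 ≤ Real.sin h := by
        apply Real.sin_nonneg_of_nonneg_of_le_pi hh0.le
        rw [hh]; apply div_le_self hπ'.le; linarith
      have : (N * Real.sin h) ^ 2 ≤ 4 := by
        have : N * Real.sin h ≤ 2 := by
          calc N * Real.sin h ≤ N * h := by gcongr
            _ ≤ 2 := by rw [hNh]; linarith
        have h0 : 0 ≤ N * Real.sin h := by positivity
        nlinarith
      calc (l * N * Real.sin h * b) ^ 2 / 2 = (N * Real.sin h) ^ 2 * (l * b) ^ 2 / 2 := by ring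
        _ ≤ 4 * (l * b) ^ 2 / 2 := by gcongr
        _ = _ := by ring
  have lim : Filter.Tendsto (fun N : ℕ => ENNReal.ofReal ((1 + (1/(N:ℝ)) * K) * Real.exp (2 * l ^ 2 * b ^ 2))) Filter.atTop
      (nhds (ENNReal.ofReal ((1 + 0 * K) * Real.exp (2 * l ^ 2 * b ^ 2)))) := by
    apply ENNReal.tendsto_ofReal
    exact ((tendsto_one_div_atTop_nhds_zero_nat.mul_const K).const_add 1).mul_const _
  have := ge_of_tendsto lim (Filter.eventually_atTop.2 ⟨1, fun N hN => main N hN⟩)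
  simpa using this

lemma bd_integrable_norm (L : E →L[ℝ] X) : Integrable (fun x => ‖L x‖) (stdGaussian E) :=
  (L.integrable_comp IsGaussian.integrable_id).norm

lemma bd_mgf_mean (L : E →L[ℝ] X) {b : ℝ} (hL : ‖L‖ ≤ b) (l : ℝ) :
    ∫ x, Real.exp (l * (‖L x‖ - ∫ y, ‖L y‖ ∂(stdGaussian E))) ∂(stdGaussian E) ≤ Real.exp (2 * l ^ 2 * b ^ 2) := by
  set M := ∫ y, ‖L y‖ ∂(stdGaussian E) with hM
  have hI : ∀ l : ℝ, Integrable (fun x => Real.exp (l * (‖L x‖ - M))) (stdGaussian E) := by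
    intro l
    have := (bd_integrable_exp L l).const_mul (Real.exp (-(l * M)))
    refine this.congr (Filter.Eventually.of_forall fun x => ?_)
    simp only
    rw [← Real.exp_add]; congr 1; ring
  have hge : ∀ l : ℝ, 1 ≤ ∫ x, Real.exp (l * (‖L x‖ - M)) ∂(stdGaussian E) := by
    intro l
    have hn := bd_integrable_norm L
    have hn2 : Integrable (fun x => l * (‖L x‖ - M)) (stdGaussian E) :=
      (hn.sub (integrable_const M)).const_mul l
    have hn3 : Integrable (fun x => 1 + l * (‖L x‖ - M)) (stdGaussian E) :=
      (integrable_const (1:ℝ)).add hn2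
    have : ∫ x, (1 + l * (‖L x‖ - M)) ∂(stdGaussian E) = 1 := by
      rw [integral_add (integrable_const _) hn2, integral_const_mul, integral_sub hn (integrable_const _)]
      simp [hM]
    rw [← this]
    apply integral_mono hn3 (hI l)
    intro x
    have := Real.add_one_le_exp (l * (‖L x‖ - M))
    simp only
    linarith
  have hprod : ∀ l : ℝ, 0 ≤ l → (∫ x, Real.exp (l * (‖L x‖ - M)) ∂(stdGaussian E)) * (∫ x, Real.exp ((-l) * (‖L x‖ - M)) ∂(stdGaussian E)) ≤ Real.exp (2 * l ^ 2 * b ^ 2) := by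
    intro l hl
    rw [← integral_prod_mul]
    have h1 := bd_mgf L hL hl
    have hi := (hI l).mul_prod (hI (-l))
    rw [← ENNReal.ofReal_le_ofReal_iff (Real.exp_pos _).le]
    refine le_trans (le_of_eq ?_) h1
    rw [ofReal_integral_eq_lintegral_ofReal hi (Filter.Eventually.of_forall fun x => by simp only [Pi.zero_apply]; positivity)]
    congr 1
    ext z
    rw [← Real.exp_add]; congr 2; ring
  have e := hge l
  have e' := hge (-l)
  rcases le_total 0 l with hl | hl
  · have := hprod l hl
    nlinarith
  · have := hprod (-l) (by linarith)
    rw [neg_neg] at this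
    have h2 : (-l)^2 = l^2 := by ring
    rw [h2] at this
    nlinarith

lemma bd_conc (L : E →L[ℝ] X) (hL : ‖L‖ ≤ 1) {t : ℝ} (ht : 0 ≤ t) :
    (stdGaussian E).real {x | t ≤ |‖L x‖ - ∫ y, ‖L y‖ ∂(stdGaussian E)|} ≤ 2 * Real.exp (-(t ^ 2 / 8)) := by
  set M := ∫ y, ‖L y‖ ∂(stdGaussian E) with hM
  have hI : ∀ l : ℝ, Integrable (fun x => Real.exp (l * (‖L x‖ - M))) (stdGaussian E) := by
    intro l
    have := (bd_integrable_exp L l).const_mul (Real.exp (-(l * M)))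
    refine this.congr (Filter.Eventually.of_forall fun x => ?_)
    simp only
    rw [← Real.exp_add]; congr 1; ring
  have h1 : (stdGaussian E).real {x | t ≤ ‖L x‖ - M} ≤ Real.exp (-(t ^ 2 / 8)) := by
    refine (measure_ge_le_exp_mul_mgf t (by positivity : 0 ≤ t / 4) (hI _)).trans ?_
    have := bd_mgf_mean L hL (t / 4)
    calc Real.exp (-(t/4) * t) * mgf (fun x => ‖L x‖ - M) (stdGaussian E) (t / 4) ≤ Real.exp (-(t/4) * t) * Real.exp (2 * (t/4) ^ 2 * 1 ^ 2) := by
          gcongr; exact this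
      _ = _ := by rw [← Real.exp_add]; congr 1; ring
  have h2 : (stdGaussian E).real {x | ‖L x‖ - M ≤ -t} ≤ Real.exp (-(t ^ 2 / 8)) := by
    refine (measure_le_le_exp_mul_mgf (-t) (by linarith : -(t / 4) ≤ 0) (hI _)).trans ?_
    have := bd_mgf_mean L hL (-(t / 4))
    calc Real.exp (-(-(t/4)) * (-t)) * mgf (fun x => ‖L x‖ - M) (stdGaussian E) (-(t / 4)) ≤ Real.exp (-(-(t/4)) * (-t)) * Real.exp (2 * (-(t/4)) ^ 2 * 1 ^ 2) := by
          gcongr; exact this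
      _ = _ := by rw [← Real.exp_add]; congr 1; ring
  have h3 : {x | t ≤ |‖L x‖ - M|} ⊆ {x | t ≤ ‖L x‖ - M} ∪ {x | ‖L x‖ - M ≤ -t} := by
    intro x hx
    simp only [Set.mem_ofPred_eq, Set.mem_union] at hx ⊢
    rcases le_abs.1 hx with h | h
    · left; exact h
    · right; linarith
  calc _ ≤ (stdGaussian E).real ({x | t ≤ ‖L x‖ - M} ∪ {x | ‖L x‖ - M ≤ -t}) := measureReal_mono h3
    _ ≤ _ := measureReal_union_le _ _
    _ ≤ _ := by linarith

end Conc
section DR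
open Module

lemma bd_det_aux {E : Type*} [NormedAddCommGroup E] [InnerProductSpace ℝ E] [FiniteDimensional ℝ E]
    (K : Submodule ℝ E) : LinearMap.det ((1 : E →ₗ[ℝ] E) + Kᗮ.starProjection.toLinearMap) = 2 ^ finrank ℝ Kᗮ := by
  let e := K.prodEquivOfIsCompl _ K.isCompl_orthogonal
  let b := (finBasis ℝ K).prod (finBasis ℝ Kᗮ)
  have h1 : ∀ x ∈ K, ((1 : E →ₗ[ℝ] E) + Kᗮ.starProjection.toLinearMap) x = x := by
    intro x hx
    have : Kᗮ.starProjection x = 0 := by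
      rw [Submodule.starProjection_apply_eq_zero_iff]
      exact Submodule.le_orthogonal_orthogonal K hx
    simp [this]
  have h2 : ∀ x ∈ Kᗮ, ((1 : E →ₗ[ℝ] E) + Kᗮ.starProjection.toLinearMap) x = (2:ℝ) • x := by
    intro x hx
    have : Kᗮ.starProjection x = x := Submodule.starProjection_eq_self_iff.2 hx
    simp [this, two_smul]
  have : LinearMap.toMatrix b b (e.symm ∘ₗ ((1 : E →ₗ[ℝ] E) + Kᗮ.starProjection.toLinearMap) ∘ₗ e.symm.symm) =
      Matrix.fromBlocks 1 0 0 ((2:ℝ) • 1) := by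
    ext (i | i) (j | j)
    · have := h1 (finBasis ℝ K j) (finBasis ℝ K j).2
      simp [LinearMap.toMatrix_apply, b, Matrix.one_apply, Finsupp.single_apply, e, eq_comm, -LinearMap.add_apply, this]
    · have := h2 (finBasis ℝ Kᗮ j) (finBasis ℝ Kᗮ j).2
      simp [LinearMap.toMatrix_apply, b, Matrix.one_apply, Finsupp.single_apply, e, eq_comm, -LinearMap.add_apply, this]
    · have := h1 (finBasis ℝ K j) (finBasis ℝ K j).2
      simp [LinearMap.toMatrix_apply, b, Matrix.one_apply, Finsupp.single_apply, e, eq_comm, -LinearMap.add_apply, this]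
    · have := h2 (finBasis ℝ Kᗮ j) (finBasis ℝ Kᗮ j).2
      simp [LinearMap.toMatrix_apply, b, Matrix.one_apply, Finsupp.single_apply, e, eq_comm, -LinearMap.add_apply, this]
  rw [← LinearMap.det_conj _ e.symm, ← LinearMap.det_toMatrix b, this, Matrix.det_fromBlocks_zero₂₁,
    Matrix.det_one, one_mul, Matrix.det_smul, Fintype.card_fin, Matrix.det_one, mul_one]

lemma bd_john {X : Type*} [NormedAddCommGroup X] [NormedSpace ℝ X] {n : ℕ} (hn : 0 < n)
    (hX : finrank ℝ X = n) :
    ∃ T : EuclideanSpace ℝ (Fin n) →L[ℝ] X, ‖T‖ ≤ 1 ∧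
      ∀ K : Submodule ℝ (EuclideanSpace ℝ (Fin n)), n ≤ 2 * finrank ℝ Kᗮ →
        ∃ x ∈ Kᗮ, ‖x‖ = 1 ∧ 1 / 4 ≤ ‖T x‖ := by
  have hfd : FiniteDimensional ℝ X := FiniteDimensional.of_finrank_pos (by omega)
  set E := EuclideanSpace ℝ (Fin n) with hE
  have hEn : finrank ℝ E = n := finrank_euclideanSpace_fin
  have e : X ≃L[ℝ] E := ContinuousLinearEquiv.ofFinrankEq (by rw [hX, hEn])
  have hp : ProperSpace (E →L[ℝ] X) := FiniteDimensional.proper ℝ _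
  have hc : IsCompact (Metric.closedBall (0 : E →L[ℝ] X) 1) := isCompact_closedBall _ _
  set D : (E →L[ℝ] X) → ℝ := fun T => |((e : X →L[ℝ] E).comp T).det| with hD
  have hDc : Continuous D := by
    have : Continuous fun T : E →L[ℝ] X => (e : X →L[ℝ] E).comp T := by fun_prop
    exact (ContinuousLinearMap.continuous_det.comp this).abs
  obtain ⟨T, hT1, hT2⟩ := hc.exists_isMaxOn ⟨0, by simp⟩ hDc.continuousOn
  have hsc : ∀ (c : ℝ) (S : E →L[ℝ] X), D (c • S) = |c| ^ n * D S := by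
    intro c S
    simp only [hD]
    have : (e : X →L[ℝ] E).comp (c • S) = c • (e : X →L[ℝ] E).comp S := by ext; simp
    rw [this, ContinuousLinearMap.det, ContinuousLinearMap.toLinearMap_smul, LinearMap.det_smul, hEn, abs_mul, abs_pow]
  have hmax : ∀ (S : E →L[ℝ] X) (r : ℝ), 0 < r → ‖S‖ ≤ r → D S ≤ r ^ n * D T := by
    intro S r hr hS
    have : r⁻¹ • S ∈ Metric.closedBall (0 : E →L[ℝ] X) 1 := by
      rw [mem_closedBall_zero_iff, norm_smul, norm_inv, Real.norm_eq_abs, abs_of_pos hr]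
      rw [inv_mul_le_one₀ hr]; exact hS
    have := hT2 this
    simp only [Set.mem_ofPred_eq] at this
    rw [hsc, abs_of_pos (by positivity), inv_pow, inv_mul_le_iff₀ (by positivity)] at this
    exact this
  have hDpos : 0 < D T := by
    have h1 : D (e.symm : E →L[ℝ] X) = 1 := by
      simp [hD, ContinuousLinearMap.det]
    have h2 := hmax (e.symm : E →L[ℝ] X) (‖(e.symm : E →L[ℝ] X)‖ + 1) (by positivity) (by linarith)
    rw [h1] at h2
    have : 0 ≤ D T := abs_nonneg _
    rcases this.eq_or_lt with h | h
    · rw [← h] at h2; simp at h2; linarith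
    · exact h
  refine ⟨T, by simpa using hT1, ?_⟩
  intro K hK
  by_contra! hcon
  have hb : ∀ x ∈ Kᗮ, ‖T x‖ ≤ 1 / 4 * ‖x‖ := by
    intro x hx
    rcases eq_or_ne x 0 with h | h
    · simp [h]
    · have hx0 : 0 < ‖x‖ := norm_pos_iff.2 h
      have := hcon (‖x‖⁻¹ • x) (Kᗮ.smul_mem _ hx) (by rw [norm_smul]; simp; field_simp)
      rw [map_smul, norm_smul, norm_inv, norm_norm, inv_mul_lt_iff₀ hx0] at this
      linarith
  set P := Kᗮ.starProjection with hP
  have hS : ‖T.comp (1 + P)‖ ≤ 5 / 4 := by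
    apply ContinuousLinearMap.opNorm_le_bound _ (by norm_num)
    intro x
    have h1 : ‖T x‖ ≤ ‖x‖ := by
      have h := T.le_opNorm x
      have : ‖T‖ ≤ 1 := by simpa using hT1
      nlinarith [norm_nonneg x]
    have h2 : ‖T (P x)‖ ≤ 1 / 4 * ‖x‖ := by
      refine (hb _ (Submodule.starProjection_apply_mem _ _)).trans ?_
      gcongr
      exact Submodule.norm_starProjection_apply_le _ _
    calc ‖(T.comp (1 + P)) x‖ = ‖T x + T (P x)‖ := by simp
      _ ≤ ‖T x‖ + ‖T (P x)‖ := norm_add_le _ _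
      _ ≤ _ := by linarith
  have hm := hmax _ (5/4) (by norm_num) hS
  have hd : D (T.comp (1 + P)) = 2 ^ finrank ℝ Kᗮ * D T := by
    simp only [hD, ContinuousLinearMap.det]
    rw [← ContinuousLinearMap.comp_assoc, ContinuousLinearMap.toLinearMap_comp _ (1 + P), LinearMap.det_comp, abs_mul, mul_comm]
    congr 1
    have := bd_det_aux K
    have h3 : ((1 + P : E →L[ℝ] E) : E →ₗ[ℝ] E) = (1 : E →ₗ[ℝ] E) + Kᗮ.starProjection.toLinearMap := by
      rw [hP]; rfl
    rw [h3, this, abs_of_pos (by positivity)]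
  rw [hd] at hm
  have hm' := le_of_mul_le_mul_right hm hDpos
  have h4 : (5/4 : ℝ) ^ n ≤ (5/4 : ℝ) ^ (2 * finrank ℝ Kᗮ) := pow_le_pow_right₀ (by norm_num) hK
  rw [pow_mul] at h4
  have h5 : ((5/4 : ℝ) ^ 2) ^ (finrank ℝ Kᗮ) < 2 ^ (finrank ℝ Kᗮ) := by
    apply pow_lt_pow_left₀ (by norm_num) (by norm_num)
    omega
  linarith

lemma bd_dvoretzky_rogers {X : Type*} [NormedAddCommGroup X] [NormedSpace ℝ X] {n m : ℕ} (hn : 0 < n)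
    (hX : finrank ℝ X = n) (hm : 2 * m ≤ n) :
    ∃ L : EuclideanSpace ℝ (Fin m) →L[ℝ] X, ‖L‖ ≤ 1 ∧ ∀ i, 1 / 4 ≤ ‖L (EuclideanSpace.single i 1)‖ := by
  obtain ⟨T, hT, hT2⟩ := bd_john hn hX
  have key : ∀ j, 2 * j ≤ n → ∃ u : Fin j → EuclideanSpace ℝ (Fin n), Orthonormal ℝ u ∧ ∀ i, 1 / 4 ≤ ‖T (u i)‖ := by
    intro j
    induction j with
    | zero => intro _; exact ⟨fun i => i.elim0, by simp [orthonormal_iff_ite], fun i => i.elim0⟩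
    | succ j ih =>
      intro hj
      obtain ⟨u, hu1, hu2⟩ := ih (by omega)
      set K := Submodule.span ℝ (Set.range u) with hK
      have hKd : finrank ℝ K = j := by
        rw [hK, finrank_span_eq_card hu1.linearIndependent]; simp
      have := K.finrank_add_finrank_orthogonal
      rw [finrank_euclideanSpace, Fintype.card_fin] at this
      obtain ⟨x, hx1, hx2, hx3⟩ := hT2 K (by omega)
      refine ⟨Matrix.vecCons x u, ?_, ?_⟩
      · rw [orthonormal_vecCons_iff]
        refine ⟨hx2, fun i => ?_, hu1⟩
        rw [Submodule.mem_orthogonal'] at hx1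
        exact hx1 _ (Submodule.subset_span ⟨i, rfl⟩)
      · intro i
        refine Fin.cases ?_ (fun i => ?_) i
        · simpa using hx3
        · simpa using hu2 i
  obtain ⟨u, hu1, hu2⟩ := key m hm
  let A : EuclideanSpace ℝ (Fin m) →ₗ[ℝ] EuclideanSpace ℝ (Fin n) :=
    { toFun := fun x => ∑ i, x i • u i
      map_add' := by intro x y; simp [add_smul, Finset.sum_add_distrib]
      map_smul' := by intro c x; simp [Finset.smul_sum, smul_smul] }
  have hA : ∀ x, ‖A x‖ = ‖x‖ := by
    intro x
    have h1 : ‖A x‖ ^ 2 = ‖x‖ ^ 2 := by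
      rw [← real_inner_self_eq_norm_sq, EuclideanSpace.real_norm_sq_eq]
      simp only [A, LinearMap.coe_mk, AddHom.coe_mk]
      rw [hu1.inner_sum]
      simp [sq]
    exact (sq_eq_sq₀ (norm_nonneg _) (norm_nonneg _)).1 h1
  refine ⟨T.comp A.toContinuousLinearMap, ?_, ?_⟩
  · apply ContinuousLinearMap.opNorm_le_bound _ (by norm_num)
    intro x
    have := T.le_opNorm (A x)
    rw [hA] at this
    simp only [ContinuousLinearMap.comp_apply, LinearMap.coe_toContinuousLinearMap']
    nlinarith [norm_nonneg x]
  · intro i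
    have : A (EuclideanSpace.single i 1) = u i := by
      simp only [A, LinearMap.coe_mk, AddHom.coe_mk]
      rw [Finset.sum_eq_single i]
      · simp
      · intro j _ hj; simp [hj]
      · simp
    simpa [this] using hu2 i

end DR
section Low
open MeasureTheory ProbabilityTheory

lemma bd_gauss_tail {t : ℝ} (ht : 0 ≤ t) :
    (gaussianReal 0 1).real (Set.Icc (-t) t) ≤ 1 - 1 / 3 * Real.exp (-(t + 1) ^ 2 / 2) := by
  have h1 : ENNReal.ofReal (1 / 3 * Real.exp (-(t + 1) ^ 2 / 2)) ≤ gaussianReal 0 1 (Set.Ioc t (t + 1)) := by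
    rw [gaussianReal_apply 0 one_ne_zero]
    calc ENNReal.ofReal (1 / 3 * Real.exp (-(t + 1) ^ 2 / 2)) 
        = ∫⁻ x in Set.Ioc t (t + 1), ENNReal.ofReal (1 / 3 * Real.exp (-(t + 1) ^ 2 / 2)) := by
          rw [setLIntegral_const]; simp
      _ ≤ _ := by
          apply setLIntegral_mono (measurable_gaussianPDF _ _)
          intro x hx
          rw [gaussianPDF]
          apply ENNReal.ofReal_le_ofReal
          rw [gaussianPDFReal]
          have hx0 : 0 ≤ x := ht.trans hx.1.le
          have hx2 : x ≤ t + 1 := hx.2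
          apply mul_le_mul _ (Real.exp_le_exp.2 _) (Real.exp_pos _).le (by positivity)
          · rw [one_div]
            apply inv_anti₀ (by positivity)
            rw [Real.sqrt_le_left (by norm_num)]
            have := Real.pi_lt_four
            simp; linarith
          · simp only [sub_zero, NNReal.coe_one, mul_one]
            have : x ^ 2 ≤ (t + 1) ^ 2 := by gcongr
            linarith
  have h2 : 1 / 3 * Real.exp (-(t + 1) ^ 2 / 2) ≤ (gaussianReal 0 1).real (Set.Ioc t (t + 1)) := by
    rw [measureReal_def]
    exact (ENNReal.ofReal_le_iff_le_toReal (measure_ne_top _ _)).1 h1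
  have h3 : Disjoint (Set.Icc (-t) t) (Set.Ioc t (t+1)) := by
    rw [Set.disjoint_left]; intro x hx hx'; exact absurd hx.2 (not_le.2 hx'.1)
  have h4 := measureReal_union (μ := gaussianReal 0 1) h3 measurableSet_Ioc
  have h5 : (gaussianReal 0 1).real (Set.Icc (-t) t ∪ Set.Ioc t (t+1)) ≤ 1 := measureReal_le_one
  linarith

lemma bd_box {m : ℕ} {t : ℝ} (ht : 0 ≤ t) (hm : 3 ≤ m * Real.exp (-(t + 1) ^ 2 / 2)) :
    (stdGaussian (EuclideanSpace ℝ (Fin m))).real {x | ∀ i, x i ∈ Set.Icc (-t) t} ≤ 1 / 2 := by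
  have hset : MeasurableSet {x : EuclideanSpace ℝ (Fin m) | ∀ i, x i ∈ Set.Icc (-t) t} := by
    have : {x : EuclideanSpace ℝ (Fin m) | ∀ i, x i ∈ Set.Icc (-t) t} = ⋂ i, (fun x : EuclideanSpace ℝ (Fin m) => x i) ⁻¹' Set.Icc (-t) t := by
      ext x; simp
    rw [this]
    refine MeasurableSet.iInter fun i => ?_
    exact measurableSet_Icc.preimage (by fun_prop)
  rw [← map_pi_eq_stdGaussian, map_measureReal_apply (by fun_prop) hset]
  have : (WithLp.toLp 2 ⁻¹' {x : EuclideanSpace ℝ (Fin m) | ∀ i, x i ∈ Set.Icc (-t) t}) = Set.univ.pi fun _ : Fin m => Set.Icc (-t) t := by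
    ext x
    simp only [Set.mem_preimage, Set.mem_ofPred_eq, Set.mem_pi, Set.mem_univ, forall_const]
  rw [this, measureReal_def, Measure.pi_pi, ENNReal.toReal_prod]
  simp only [Finset.prod_const, Finset.card_univ, Fintype.card_fin]
  have h1 := bd_gauss_tail ht
  rw [measureReal_def] at h1
  set p := 1 / 3 * Real.exp (-(t + 1) ^ 2 / 2) with hp
  calc _ ≤ (1 - p) ^ m := by gcongr
    _ ≤ (Real.exp (-p)) ^ m := by
        gcongr
        · exact le_trans ENNReal.toReal_nonneg h1
        · have := Real.add_one_le_exp (-p); linarith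
    _ = Real.exp (-(m * p)) := by rw [← Real.exp_nat_mul]; congr 1; ring
    _ ≤ Real.exp (-1) := by
        gcongr
        rw [hp]; linarith
    _ ≤ 1 / 2 := by
        rw [Real.exp_neg, one_div]
        apply inv_anti₀ (by norm_num)
        have := Real.exp_one_gt_d9; linarith

variable {X : Type*} [NormedAddCommGroup X] [NormedSpace ℝ X]

noncomputable def bdFlip {m : ℕ} (s : Fin m → Bool) : EuclideanSpace ℝ (Fin m) ≃ₗᵢ[ℝ] EuclideanSpace ℝ (Fin m) :=
  LinearIsometryEquiv.piLpCongrRight 2 (fun i => if s i then LinearIsometryEquiv.refl ℝ ℝ else LinearIsometryEquiv.neg ℝ)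

lemma bdFlip_apply {m : ℕ} (s : Fin m → Bool) (x : EuclideanSpace ℝ (Fin m)) (i : Fin m) :
    bdFlip s x i = if s i then x i else - x i := by
  simp only [bdFlip, LinearIsometryEquiv.piLpCongrRight_apply]
  split_ifs <;> simp

lemma bd_pointwise {m : ℕ} (L : EuclideanSpace ℝ (Fin m) →L[ℝ] X) (hL : ∀ i, 1 / 4 ≤ ‖L (EuclideanSpace.single i 1)‖)
    (x : EuclideanSpace ℝ (Fin m)) (i : Fin m) : 2 ^ m * (|x i| / 4) ≤ ∑ s : Fin m → Bool, ‖L (bdFlip s x)‖ := by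
  let φ : (Fin m → Bool) → (Fin m → Bool) := fun s j => if j = i then s j else !(s j)
  have hφ : Function.Involutive φ := by
    intro s; ext j; simp only [φ]; split_ifs <;> simp
  have h1 : ∑ s : Fin m → Bool, ‖L (bdFlip s x)‖ = ∑ s : Fin m → Bool, ‖L (bdFlip (φ s) x)‖ :=
    (Equiv.sum_comp hφ.toPerm (fun s => ‖L (bdFlip s x)‖)).symm
  have h2 : ∀ s, |x i| / 2 ≤ ‖L (bdFlip s x)‖ + ‖L (bdFlip (φ s) x)‖ := by
    intro s
    refine le_trans ?_ (norm_add_le _ _)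
    rw [← map_add]
    have : bdFlip s x + bdFlip (φ s) x = (2 * (if s i then x i else - x i)) • EuclideanSpace.single i (1:ℝ) := by
      ext j
      simp only [PiLp.add_apply, bdFlip_apply, PiLp.smul_apply, φ]
      by_cases hj : j = i
      · subst hj; simp; split_ifs <;> ring
      · cases hs : s j <;> simp [hj]
    rw [this, map_smul, norm_smul, norm_mul]
    have h3 : ‖if s i then x i else - x i‖ = |x i| := by split_ifs <;> simp
    rw [h3]
    have := hL i
    simp only [Real.norm_ofNat]
    nlinarith [abs_nonneg (x i)]
  have h3 : ∑ s : Fin m → Bool, |x i| / 2 ≤ ∑ s : Fin m → Bool, (‖L (bdFlip s x)‖ + ‖L (bdFlip (φ s) x)‖) :=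
    Finset.sum_le_sum fun s _ => h2 s
  rw [Finset.sum_add_distrib, ← h1] at h3
  simp at h3
  linarith

lemma bd_mean_lower {m : ℕ} (L : EuclideanSpace ℝ (Fin m) →L[ℝ] X) (hL : ∀ i, 1 / 4 ≤ ‖L (EuclideanSpace.single i 1)‖)
    {t : ℝ} (ht : 0 ≤ t) (hm : 3 ≤ m * Real.exp (-(t + 1) ^ 2 / 2)) :
    t / 8 ≤ ∫ x, ‖L x‖ ∂(stdGaussian (EuclideanSpace ℝ (Fin m))) := by
  set μ := stdGaussian (EuclideanSpace ℝ (Fin m)) with hμ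
  have hint : Integrable (fun x => ‖L x‖) μ := (L.integrable_comp IsGaussian.integrable_id).norm
  have hmap : ∀ s : Fin m → Bool, μ.map (bdFlip s) = μ := fun s => stdGaussian_map (bdFlip s)
  have hi : ∀ s : Fin m → Bool, Integrable (fun x => ‖L (bdFlip s x)‖) μ := by
    intro s
    have h := hint
    rw [← hmap s] at h
    exact h.comp_measurable (bdFlip s).continuous.measurable
  have he : ∀ s : Fin m → Bool, ∫ x, ‖L (bdFlip s x)‖ ∂μ = ∫ x, ‖L x‖ ∂μ := by
    intro s
    conv_rhs => rw [← hmap s]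
    rw [integral_map (bdFlip s).continuous.measurable.aemeasurable (by fun_prop)]
  have hsum : ∫ x, ∑ s : Fin m → Bool, ‖L (bdFlip s x)‖ ∂μ = 2 ^ m * ∫ x, ‖L x‖ ∂μ := by
    rw [integral_finsetSum _ (fun s _ => hi s)]
    simp [he]
  set B := {x : EuclideanSpace ℝ (Fin m) | ∀ i, x i ∈ Set.Icc (-t) t} with hB
  have hBm : MeasurableSet B := by
    have : B = ⋂ i, (fun x : EuclideanSpace ℝ (Fin m) => x i) ⁻¹' Set.Icc (-t) t := by
      ext x; simp [hB]
    rw [this]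
    refine MeasurableSet.iInter fun i => ?_
    exact measurableSet_Icc.preimage (by fun_prop)
  have hBl : μ.real B ≤ 1 / 2 := bd_box ht hm
  have hBc : 1 / 2 ≤ μ.real Bᶜ := by
    rw [probReal_compl_eq_one_sub hBm]; linarith
  have hlow : ∫ x, Bᶜ.indicator (fun _ => 2 ^ m * (t / 4)) x ∂μ ≤ ∫ x, ∑ s : Fin m → Bool, ‖L (bdFlip s x)‖ ∂μ := by
    apply integral_mono ((integrable_const _).indicator hBm.compl) (integrable_finsetSum _ (fun s _ => hi s))
    intro x
    by_cases hx : x ∈ Bᶜ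
    · simp only [Set.indicator_of_mem hx]
      have : ∃ i, x i ∉ Set.Icc (-t) t := by
        by_contra! h
        exact hx h
      obtain ⟨i, hi⟩ := this
      refine le_trans ?_ (bd_pointwise L hL x i)
      gcongr
      by_contra! h
      exact hi ⟨(abs_lt.1 h).1.le, (abs_lt.1 h).2.le⟩
    · simp only [Set.indicator_of_notMem hx]
      positivity
  rw [hsum, integral_indicator_const _ hBm.compl, smul_eq_mul] at hlow
  have : (0:ℝ) < 2 ^ m := by positivity
  have h1 : 2 ^ m * (t / 8) ≤ 2 ^ m * ∫ x, ‖L x‖ ∂μ := by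
    refine le_trans ?_ hlow
    have : 0 ≤ (2:ℝ) ^ m * (t / 4) := by positivity
    nlinarith
  exact le_of_mul_le_mul_left h1 this

end Low
section Mat
open MeasureTheory ProbabilityTheory

noncomputable def bdRow {k m : ℕ} (a : Fin k → ℝ) :
    EuclideanSpace ℝ (Fin k × Fin m) →L[ℝ] EuclideanSpace ℝ (Fin m) :=
  LinearMap.toContinuousLinearMap
    { toFun := fun g => WithLp.toLp 2 (fun j => ∑ i, a i * g (i, j))
      map_add' := by
        intro g h; ext j
        simp [mul_add, Finset.sum_add_distrib]
      map_smul' := by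
        intro c g; ext j
        simp only [PiLp.smul_apply, smul_eq_mul, RingHom.id_apply, Finset.mul_sum]
        exact Finset.sum_congr rfl fun i _ => by ring }

lemma bdRow_apply {k m : ℕ} (a : Fin k → ℝ) (g : EuclideanSpace ℝ (Fin k × Fin m)) (j : Fin m) :
    bdRow a g j = ∑ i, a i * g (i, j) := rfl

lemma bdRow_law {k m : ℕ} (a : Fin k → ℝ) (ha : ∑ i, a i ^ 2 = 1) :
    (stdGaussian (EuclideanSpace ℝ (Fin k × Fin m))).map (bdRow a) =
      stdGaussian (EuclideanSpace ℝ (Fin m)) := by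
  have : IsProbabilityMeasure ((stdGaussian (EuclideanSpace ℝ (Fin k × Fin m))).map (bdRow (m := m) a)) :=
    Measure.isProbabilityMeasure_map (bdRow a).continuous.measurable.aemeasurable
  apply Measure.ext_of_charFunDual
  ext φ
  rw [charFunDual_map, charFunDual_stdGaussian, charFunDual_stdGaussian]
  have : ‖φ ∘SL bdRow (m := m) a‖ ^ 2 = ‖φ‖ ^ 2 := by
    rw [OrthonormalBasis.norm_dual (EuclideanSpace.basisFun _ ℝ), OrthonormalBasis.norm_dual (EuclideanSpace.basisFun _ ℝ),
      Fintype.sum_prod_type]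
    have : ∀ i j, (φ ∘SL bdRow (m := m) a) (EuclideanSpace.basisFun _ ℝ (i, j)) ^ 2
        = a i ^ 2 * φ (EuclideanSpace.basisFun _ ℝ j) ^ 2 := by
      intro i j
      have : bdRow (m := m) a (EuclideanSpace.basisFun _ ℝ (i, j)) = a i • EuclideanSpace.basisFun _ ℝ j := by
        ext l
        rw [bdRow_apply]
        simp only [EuclideanSpace.basisFun_apply, PiLp.smul_apply, smul_eq_mul, PiLp.single_apply]
        rw [Finset.sum_eq_single i]
        · simp
        · intro b _ hb; simp [hb]
        · simp
      rw [ContinuousLinearMap.comp_apply, this, map_smul, smul_eq_mul, mul_pow]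
    simp only [this]
    rw [← Finset.sum_mul_sum, ha, one_mul]
  congr 2
  rw [← Complex.ofReal_pow, this, Complex.ofReal_pow]

variable {X : Type*} [NormedAddCommGroup X] [NormedSpace ℝ X]

lemma bd_union {k m : ℕ} (L : EuclideanSpace ℝ (Fin m) →L[ℝ] X) (hL : ‖L‖ ≤ 1) {M η : ℝ}
    (hM : M = ∫ x, ‖L x‖ ∂(stdGaussian (EuclideanSpace ℝ (Fin m)))) (hη : 0 ≤ η * M)
    (A : Finset (Fin k → ℝ)) (hA : ∀ a ∈ A, 0 < ∑ i, a i ^ 2)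
    (hcard : A.card * (2 * Real.exp (-((η * M) ^ 2 / 8))) < 1) :
    ∃ v : Fin k → X, ∀ a ∈ A, |‖∑ i, a i • v i‖ - M * √(∑ i, a i ^ 2)| ≤ η * M * √(∑ i, a i ^ 2) := by
  set μ := stdGaussian (EuclideanSpace ℝ (Fin k × Fin m)) with hμ
  let bad : (Fin k → ℝ) → Set (EuclideanSpace ℝ (Fin k × Fin m)) := fun a =>
    {g | η * M ≤ |‖L (bdRow (fun i => a i / √(∑ i, a i ^ 2)) g)‖ - M|}
  have hbad : ∀ a ∈ A, μ.real (bad a) ≤ 2 * Real.exp (-((η * M) ^ 2 / 8)) := by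
    intro a ha
    have hs := hA a ha
    have h1 := bdRow_law (m := m) (fun i => a i / √(∑ i, a i ^ 2)) (by
      simp only [div_pow, Real.sq_sqrt hs.le]
      rw [← Finset.sum_div, div_self hs.ne'])
    have h2 := bd_conc L hL hη
    rw [← hM, ← h1, map_measureReal_apply (bdRow _).continuous.measurable] at h2
    · exact h2
    · exact measurableSet_le (by fun_prop) (by have : Continuous fun x => |‖L x‖ - M| := (by fun_prop); exact this.measurable)
  have hU : μ.real (⋃ a ∈ A, bad a) < 1 := by
    refine lt_of_le_of_lt (measureReal_biUnion_finset_le A bad) (lt_of_le_of_lt (Finset.sum_le_sum hbad) ?_)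
    rw [Finset.sum_const, nsmul_eq_mul]; exact hcard
  have hne : (⋃ a ∈ A, bad a) ≠ Set.univ := by
    intro h; rw [h] at hU; simp at hU
  obtain ⟨g, hg⟩ := (Set.ne_univ_iff_exists_notMem _).1 hne
  refine ⟨fun i => L (WithLp.toLp 2 fun j => g (i, j)), fun a ha => ?_⟩
  have hs := hA a ha
  have hq : 0 < √(∑ i, a i ^ 2) := Real.sqrt_pos.2 hs
  have h1 : g ∉ bad a := by
    intro h; exact hg (Set.mem_biUnion ha h)
  have h2 : |‖L (bdRow (fun i => a i / √(∑ i, a i ^ 2)) g)‖ - M| < η * M := not_le.1 h1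
  have h3 : ∑ i, a i • L (WithLp.toLp 2 fun j => g (i, j)) = √(∑ i, a i ^ 2) • L (bdRow (fun i => a i / √(∑ i, a i ^ 2)) g) := by
    simp only [← map_smul, ← map_sum]
    congr 1
    ext j
    rw [bdRow_apply]
    simp only [WithLp.ofLp_sum, WithLp.ofLp_smul, Finset.sum_apply, Pi.smul_apply, smul_eq_mul, PiLp.smul_apply]
    refine Finset.sum_congr rfl fun i _ => ?_
    field_simp
  rw [h3, norm_smul, Real.norm_of_nonneg hq.le, mul_comm M, ← mul_sub, abs_mul, abs_of_pos hq, mul_comm (η * M)]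
  exact mul_le_mul_of_nonneg_left h2.le hq.le

end Mat
section Brouwer
open MeasureTheory Set Filter Topology

variable {E : Type*} [NormedAddCommGroup E] [InnerProductSpace ℝ E] [FiniteDimensional ℝ E]
  [MeasurableSpace E] [BorelSpace E]

/-- the real polynomial obtained by integrating coefficients over a compact set -/
lemma bd_poly_int (P : Polynomial C(E, ℝ)) (B : Set E) (hB : IsCompact B) :
    ∃ Q : Polynomial ℝ, ∀ t : ℝ, Q.eval t = ∫ x in B, (P.eval (ContinuousMap.const E t)) x := by
  refine ⟨∑ i ∈ Finset.range (P.natDegree + 1), Polynomial.monomial i (∫ x in B, P.coeff i x), fun t => ?_⟩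
  have h1 : ∀ x, (P.eval (ContinuousMap.const E t)) x = ∑ i ∈ Finset.range (P.natDegree + 1), P.coeff i x * t ^ i := by
    intro x
    rw [Polynomial.eval_eq_sum_range]
    simp
  simp only [h1]
  rw [integral_finsetSum]
  · rw [Polynomial.eval_finsetSum]
    refine Finset.sum_congr rfl fun i _ => ?_
    rw [Polynomial.eval_monomial, integral_mul_const]
  · intro i _
    exact ((P.coeff i).continuous.mul continuous_const).continuousOn.integrableOn_compact hB

lemma bd_poly_det (A : E → E →L[ℝ] E) (hA : Continuous A) :
    ∃ P : Polynomial C(E, ℝ), ∀ (t : ℝ) (x : E),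
      (P.eval (ContinuousMap.const E t)) x = (ContinuousLinearMap.id ℝ E + t • A x).det := by
  let b := Module.finBasis ℝ E
  let M : Matrix (Fin (Module.finrank ℝ E)) (Fin (Module.finrank ℝ E)) C(E, ℝ) := Matrix.of fun i j =>
    ⟨fun x => LinearMap.toMatrix b b (A x : E →ₗ[ℝ] E) i j, by
      have : (fun x => LinearMap.toMatrix b b (A x : E →ₗ[ℝ] E) i j) = fun x => b.coord i (A x (b j)) := by
        ext x; simp [LinearMap.toMatrix_apply]
      rw [this]
      have hc : Continuous (b.coord i) := LinearMap.continuous_of_finiteDimensional _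
      exact hc.comp (hA.clm_apply continuous_const)⟩
  refine ⟨(1 + (Polynomial.X : Polynomial C(E, ℝ)) • M.map Polynomial.C).det, fun t x => ?_⟩
  let ev : C(E, ℝ) →+* ℝ := { toFun := fun f => f x, map_one' := rfl, map_mul' := fun _ _ => rfl, map_zero' := rfl, map_add' := fun _ _ => rfl }
  have h1 : ∀ P : Polynomial C(E, ℝ), (P.eval (ContinuousMap.const E t)) x = (ev.comp (Polynomial.evalRingHom (ContinuousMap.const E t))) P := fun P => rfl
  rw [h1, RingHom.map_det, ContinuousLinearMap.det, ← LinearMap.det_toMatrix b]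
  congr 1
  ext i j
  have h2 : ∀ Q : Polynomial C(E, ℝ), (ev.comp (Polynomial.evalRingHom (ContinuousMap.const E t))) Q = (Q.eval (ContinuousMap.const E t)) x := fun Q => rfl
  simp only [RingHom.mapMatrix_apply, Matrix.map_apply, Matrix.add_apply, Matrix.smul_apply, h2, map_add, map_smul,
    ContinuousLinearMap.toLinearMap_add, ContinuousLinearMap.toLinearMap_smul, ContinuousLinearMap.coe_id, LinearMap.toMatrix_id, smul_eq_mul,
    Polynomial.eval_mul, Polynomial.eval_X, Polynomial.eval_C, ContinuousMap.mul_apply, ContinuousMap.const_apply]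
  rw [Matrix.one_apply, Matrix.one_apply]
  split_ifs <;> simp [M]

lemma bd_bij {g : E → E} {c : NNReal} (hg : LipschitzWith c g) (hc : c < 1) {R : ℝ} 
    (hs : ∀ x, R < ‖x‖ → g x = 0) :
    InjOn (fun x => x + g x) (Metric.closedBall 0 R) ∧
      (fun x => x + g x) '' (Metric.closedBall 0 R) = Metric.closedBall 0 R := by
  have hinj : Function.Injective (fun x => x + g x) := by
    intro x y hxy
    have h1 : x - y = g y - g x := by
      have : x + g x = y + g y := hxy
      rw [sub_eq_sub_iff_add_eq_add, this]; abel
    have h2 := hg.dist_le_mul y x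
    rw [dist_eq_norm, ← h1, dist_eq_norm, norm_sub_rev y x] at h2
    have hc' : (c : ℝ) < 1 := by exact_mod_cast hc
    have : ‖x - y‖ = 0 := by nlinarith [norm_nonneg (x - y)]
    exact sub_eq_zero.1 (norm_eq_zero.1 this)
  have hsurj : Function.Surjective (fun x => x + g x) := by
    intro y
    have hK : ContractingWith c (fun x => y - g x) := by
      refine ⟨hc, LipschitzWith.of_dist_le_mul fun x z => ?_⟩
      rw [dist_sub_left]
      exact hg.dist_le_mul x z
    refine ⟨ContractingWith.fixedPoint _ hK, ?_⟩
    have := hK.fixedPoint_isFixedPt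
    have h : y - g (ContractingWith.fixedPoint _ hK) = ContractingWith.fixedPoint _ hK := this
    show ContractingWith.fixedPoint _ hK + g (ContractingWith.fixedPoint _ hK) = y
    rw [← sub_eq_iff_eq_add.1 h]
  refine ⟨hinj.injOn, ?_⟩
  apply Subset.antisymm
  · rintro _ ⟨x, hx, rfl⟩
    by_contra h
    rw [mem_closedBall_zero_iff, not_le] at h
    have h1 : x + g x = (x + g x) + g (x + g x) := by rw [hs _ h, add_zero]
    have := hinj h1
    have h : R < ‖x + g x‖ := h
    rw [← this] at h
    rw [mem_closedBall_zero_iff] at hx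
    linarith
  · intro y hy
    obtain ⟨x, rfl⟩ := hsurj y
    refine ⟨x, ?_, rfl⟩
    by_contra h
    rw [mem_closedBall_zero_iff, not_le] at h
    simp only [hs x h, add_zero, mem_closedBall_zero_iff] at hy
    linarith

lemma bd_integral_id {g : E → E} (hg : ContDiff ℝ 1 g) (hcs : HasCompactSupport g) {R : ℝ}
    (hs : ∀ x, R < ‖x‖ → g x = 0) (P : C(E, ℝ)) (PP : Polynomial C(E, ℝ)) 
    (hPP : ∀ (t : ℝ) (x : E), (PP.eval (ContinuousMap.const E t)) x = P (x + t • g x)) :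
    ∫ x in Metric.closedBall (0:E) R, P x = ∫ x in Metric.closedBall (0:E) R, P (x + g x) * (ContinuousLinearMap.id ℝ E + fderiv ℝ g x).det := by
  have hB : IsCompact (Metric.closedBall (0:E) R) := isCompact_closedBall 0 R
  have hdc : Continuous (fderiv ℝ g) := hg.continuous_fderiv one_ne_zero
  obtain ⟨D, hD⟩ := bd_poly_det (fderiv ℝ g) hdc
  obtain ⟨Q, hQ⟩ := bd_poly_int (PP * D) _ hB
  have hQ' : ∀ t, Q.eval t = ∫ x in Metric.closedBall (0:E) R, P (x + t • g x) * (ContinuousLinearMap.id ℝ E + t • fderiv ℝ g x).det := by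
    intro t
    rw [hQ]
    simp [Polynomial.eval_mul, hPP, hD]
  obtain ⟨C, hC⟩ := hg.lipschitzWith_of_hasCompactSupport hcs one_ne_zero
  -- small t
  have hpos : ∀ᶠ t : ℝ in 𝓝 0, ∀ x ∈ Metric.closedBall (0:E) R, 0 < (ContinuousLinearMap.id ℝ E + t • fderiv ℝ g x).det := by
    apply hB.eventually_forall_of_forall_eventually
    intro y _
    have hcont : Continuous fun z : ℝ × E => (ContinuousLinearMap.id ℝ E + z.1 • fderiv ℝ g z.2).det := by
      have : (Continuous fun z : ℝ × E => (ContinuousLinearMap.id ℝ E + z.1 • fderiv ℝ g z.2)) :=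
        continuous_const.add (continuous_fst.smul (hdc.comp continuous_snd))
      exact ContinuousLinearMap.continuous_det.comp this
    have : ContinuousAt (fun z : ℝ × E => (ContinuousLinearMap.id ℝ E + z.1 • fderiv ℝ g z.2).det) (0, y) := hcont.continuousAt
    apply this.eventually_const_lt
    simp [ContinuousLinearMap.det]
  have hlip : ∀ᶠ t : ℝ in 𝓝 0, ‖t‖₊ * C < 1 := by
    have hcont : Continuous fun t : ℝ => ‖t‖₊ * C := by fun_prop
    have : ContinuousAt (fun t : ℝ => ‖t‖₊ * C) 0 := hcont.continuousAt
    apply this.eventually_lt_const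
    simp
  have hev : ∀ᶠ t : ℝ in 𝓝 0, Q.eval t = ∫ x in Metric.closedBall (0:E) R, P x := by
    filter_upwards [hpos, hlip] with t h1 h2
    rw [hQ']
    have hl : LipschitzWith (‖t‖₊ * C) (fun x => t • g x) := by
      exact (lipschitzWith_smul t).comp hC
    obtain ⟨hi, him⟩ := bd_bij hl h2 (R := R) (by intro x hx; simp [hs x hx])
    have := integral_image_eq_integral_abs_det_fderiv_smul (volume : Measure E) (s := Metric.closedBall 0 R) (f := fun x => x + t • g x)
      (f' := fun x => ContinuousLinearMap.id ℝ E + t • fderiv ℝ g x) Metric.isClosed_closedBall.measurableSet (by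
        intro x _
        apply HasFDerivAt.hasFDerivWithinAt
        exact (hasFDerivAt_id x).add (((hg.differentiable one_ne_zero) x).hasFDerivAt.const_smul t)) hi (fun x => P x)
    rw [him] at this
    rw [this]
    refine setIntegral_congr_fun Metric.isClosed_closedBall.measurableSet fun x hx => ?_
    simp only [abs_of_pos (h1 x hx), smul_eq_mul]
    ring
  have hinf : Set.Infinite {t | Q.eval t = (Polynomial.C (∫ x in Metric.closedBall (0:E) R, P x)).eval t} := by
    apply infinite_of_mem_nhds (0:ℝ)
    filter_upwards [hev] with t ht
    simpa using ht
  have := Polynomial.eq_of_infinite_eval_eq Q _ hinf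
  have h1 := hQ' 1
  rw [this] at h1
  simpa using h1

lemma bd_smooth_zero {g : E → E} (hg : ContDiff ℝ 1 g) (hcs : HasCompactSupport g) : ∃ x, x + g x = 0 := by
  by_contra! hne
  obtain ⟨R, hR0, hR⟩ := hcs.isCompact.isBounded.exists_pos_norm_le
  have hs : ∀ x, R < ‖x‖ → g x = 0 := by
    intro x hx
    by_contra h
    exact absurd (hR x (subset_tsupport g h)) (not_le.2 hx)
  set B := Metric.closedBall (0:E) R with hBdef
  have hB : IsCompact B := isCompact_closedBall 0 R
  have hBm : MeasurableSet B := Metric.isClosed_closedBall.measurableSet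
  have h0B : (0:E) ∈ B := by simp [hBdef, hR0.le]
  have hFc : Continuous fun x => ‖x + g x‖ := by have := hg.continuous; fun_prop
  -- lower bound
  obtain ⟨x0, _, hx0⟩ := hB.exists_isMinOn ⟨0, h0B⟩ hFc.continuousOn
  obtain ⟨ε, hε0, hεR, hε⟩ : ∃ ε, 0 < ε ∧ ε ≤ R ∧ ∀ x ∈ B, ε ≤ ‖x + g x‖ :=
    ⟨min R ‖x0 + g x0‖, lt_min hR0 (norm_pos_iff.2 (hne x0)), min_le_left _ _, fun x hx => (min_le_right _ _).trans (hx0 hx)⟩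
  -- upper bound
  obtain ⟨S0, hS0⟩ := hB.exists_bound_of_continuousOn hFc.continuousOn
  obtain ⟨S, hS1, hS⟩ : ∃ S, R ≤ S ∧ ∀ x ∈ B, ‖x + g x‖ ≤ S :=
    ⟨max R S0, le_max_left _ _, fun x hx => by
      have := hS0 x hx; rw [norm_norm] at this; exact this.trans (le_max_right _ _)⟩
  have hSpos : 0 < S := hR0.trans_le hS1
  have hdc : Continuous fun x => (ContinuousLinearMap.id ℝ E + fderiv ℝ g x).det :=
    ContinuousLinearMap.continuous_det.comp (continuous_const.add (hg.continuous_fderiv one_ne_zero))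
  obtain ⟨C, hC⟩ := hB.exists_bound_of_continuousOn hdc.continuousOn
  have hCnn : 0 ≤ C := (norm_nonneg _).trans (hC 0 h0B)
  let p : C(E, ℝ) := ⟨fun x => 1 - ‖x‖ ^ 2 / S ^ 2, by fun_prop⟩
  let cb : C(E, ℝ) := ⟨fun x => - 2 * inner ℝ x (g x) / S ^ 2, by have := hg.continuous; fun_prop⟩
  let cc : C(E, ℝ) := ⟨fun x => - ‖g x‖ ^ 2 / S ^ 2, by have := hg.continuous; fun_prop⟩
  have hid : ∀ N : ℕ, ∫ x in B, (p x) ^ N = ∫ x in B, (p (x + g x)) ^ N * (ContinuousLinearMap.id ℝ E + fderiv ℝ g x).det := by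
    intro N
    have := bd_integral_id hg hcs hs (p ^ N) ((Polynomial.C p + Polynomial.X * Polynomial.C cb + Polynomial.X ^ 2 * Polynomial.C cc) ^ N) (by
      intro t x
      simp only [Polynomial.eval_pow, Polynomial.eval_add, Polynomial.eval_mul, Polynomial.eval_C, Polynomial.eval_X,
        ContinuousMap.pow_apply, ContinuousMap.add_apply, ContinuousMap.mul_apply, ContinuousMap.const_apply]
      congr 1
      simp only [p, cb, cc, ContinuousMap.coe_mk, norm_add_sq_real, norm_smul, inner_smul_right, mul_pow, Real.norm_eq_abs, sq_abs]
      field_simp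
      ring)
    simpa using this
  set q := 1 - ε ^ 2 / S ^ 2 with hq
  set r := 1 - (ε / 2) ^ 2 / S ^ 2 with hr
  have hq0 : 0 ≤ q := by
    rw [hq, sub_nonneg, div_le_one (by positivity)]
    exact pow_le_pow_left₀ hε0.le (hεR.trans hS1) 2
  have hqr : q < r := by
    rw [hq, hr]
    have : (ε / 2) ^ 2 / S ^ 2 < ε ^ 2 / S ^ 2 := by
      gcongr; linarith
    linarith
  have hr0 : 0 < r := hq0.trans_lt hqr
  set v := (volume : Measure E).real (Metric.ball 0 (ε / 2)) with hv
  have hvpos : 0 < v := by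
    rw [hv, measureReal_def]
    exact ENNReal.toReal_pos (Metric.measure_ball_pos _ _ (by positivity)).ne' measure_ball_lt_top.ne
  have hp0 : ∀ x ∈ B, 0 ≤ p x := by
    intro x hx
    show 0 ≤ 1 - ‖x‖ ^ 2 / S ^ 2
    rw [sub_nonneg, div_le_one (by positivity)]
    exact pow_le_pow_left₀ (norm_nonneg _) ((mem_closedBall_zero_iff.1 hx).trans hS1) 2
  have hsub : Metric.ball (0:E) (ε / 2) ⊆ B := by
    apply Metric.ball_subset_closedBall.trans
    exact Metric.closedBall_subset_closedBall (by linarith)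
  have hlow : ∀ N : ℕ, r ^ N * v ≤ ∫ x in B, (p x) ^ N := by
    intro N
    have hint : IntegrableOn (fun x => p x ^ N) B volume := (p.continuous.pow N).continuousOn.integrableOn_compact hB
    calc r ^ N * v = ∫ x in Metric.ball (0:E) (ε / 2), r ^ N := by
          rw [setIntegral_const, smul_eq_mul, mul_comm]
      _ ≤ ∫ x in Metric.ball (0:E) (ε / 2), (p x) ^ N := by
          apply setIntegral_mono_on (integrableOn_const measure_ball_lt_top.ne) (hint.mono_set hsub) Metric.isOpen_ball.measurableSet
          intro x hx
          apply pow_le_pow_left₀ hr0.le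
          show 1 - (ε / 2) ^ 2 / S ^ 2 ≤ 1 - ‖x‖ ^ 2 / S ^ 2
          have := (mem_ball_zero_iff.1 hx).le
          gcongr
      _ ≤ _ := by
          apply setIntegral_mono_set hint
          · filter_upwards [ae_restrict_mem hBm] with x hx
            exact pow_nonneg (hp0 x hx) N
          · exact hsub.eventuallyLE
  have hup : ∀ N : ℕ, ∫ x in B, (p (x + g x)) ^ N * (ContinuousLinearMap.id ℝ E + fderiv ℝ g x).det ≤ q ^ N * C * volume.real B := by
    intro N
    refine (le_abs_self _).trans ?_
    rw [← Real.norm_eq_abs]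
    apply norm_setIntegral_le_of_norm_le_const hB.measure_lt_top
    intro x hx
    rw [norm_mul, norm_pow]
    apply mul_le_mul _ (hC x hx) (norm_nonneg _) (by positivity)
    apply pow_le_pow_left₀ (norm_nonneg _)
    have h1 : p (x + g x) = 1 - ‖x + g x‖ ^ 2 / S ^ 2 := rfl
    rw [h1, Real.norm_of_nonneg]
    · have := hε x hx
      rw [hq]; gcongr
    · rw [sub_nonneg, div_le_one (by positivity)]
      exact pow_le_pow_left₀ (norm_nonneg _) (hS x hx) 2
  have hfin : ∀ N : ℕ, v ≤ (q / r) ^ N * (C * volume.real B) := by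
    intro N
    have h1 := (hlow N).trans ((hid N).le.trans (hup N))
    rw [div_pow, div_mul_eq_mul_div, le_div_iff₀ (by positivity)]
    linarith
  have hlim : Tendsto (fun N : ℕ => (q / r) ^ N * (C * volume.real B)) atTop (𝓝 (0 * (C * volume.real B))) :=
    (tendsto_pow_atTop_nhds_zero_of_lt_one (by positivity) ((div_lt_one hr0).2 hqr)).mul_const _
  rw [zero_mul] at hlim
  have := ge_of_tendsto' hlim hfin
  linarith

lemma bd_cs_zero {g : E → E} (hg : Continuous g) (hcs : HasCompactSupport g) : ∃ x, x + g x = 0 := by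
  by_contra! hne
  have hpos : ∀ x, 0 < ‖x + g x‖ := fun x => norm_pos_iff.2 (hne x)
  obtain ⟨h, h1, h2, h3⟩ := hg.exists_contDiff_approx 1 (ε := fun x => ‖x + g x‖) (by fun_prop) hpos
  have hcs' : HasCompactSupport h := hcs.mono h3
  obtain ⟨x, hx⟩ := bd_smooth_zero (by exact_mod_cast h1) hcs'
  have := h2 x
  rw [dist_eq_norm, eq_neg_of_add_eq_zero_right hx, ← norm_neg, neg_sub, sub_neg_eq_add, add_comm] at this
  exact lt_irrefl _ this

lemma bd_bdd_zero {u : E → E} (hu : Continuous u) {C : ℝ} (hC : ∀ x, ‖u x‖ ≤ C) : ∃ x, x + u x = 0 := by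
  have hC0 : 0 ≤ C := (norm_nonneg _).trans (hC 0)
  let χ : ContDiffBump (0:E) := ⟨C + 1, C + 2, by linarith, by linarith⟩
  obtain ⟨x, hx⟩ := bd_cs_zero (g := fun x => χ x • u x) (χ.continuous.smul hu) (χ.hasCompactSupport.smul_right)
  refine ⟨x, ?_⟩
  have h1 : ‖x‖ ≤ C := by
    rw [eq_neg_of_add_eq_zero_left hx, norm_neg, norm_smul, Real.norm_of_nonneg χ.nonneg]
    calc χ x * ‖u x‖ ≤ 1 * ‖u x‖ := by gcongr; exact χ.le_one
      _ ≤ C := by rw [one_mul]; exact hC x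
  have h2 : χ x = 1 := χ.one_of_mem_closedBall (by rw [mem_closedBall_zero_iff]; show ‖x‖ ≤ C + 1; linarith)
  simpa [h2] using hx

end Brouwer

lemma bd_miranda {ι : Type*} [Fintype ι] {δ : ℝ} (hδ : 0 ≤ δ) (f : (ι → ℝ) → ι → ℝ) (hf : Continuous f)
    (hlo : ∀ x, (∀ i, |x i| ≤ δ) → ∀ i, x i = -δ → f x i ≤ 0)
    (hhi : ∀ x, (∀ i, |x i| ≤ δ) → ∀ i, x i = δ → 0 ≤ f x i) :
    ∃ x, (∀ i, |x i| ≤ δ) ∧ f x = 0 := by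
  let P : (ι → ℝ) → ι → ℝ := fun x i => max (-δ) (min δ (x i))
  have hP : ∀ x i, |P x i| ≤ δ := by
    intro x i
    rw [abs_le]
    exact ⟨le_max_left _ _, max_le (by linarith) (min_le_left _ _)⟩
  have hPc : Continuous P := by
    apply continuous_pi; intro i
    exact continuous_const.max (continuous_const.min (continuous_apply i))
  let u : EuclideanSpace ℝ ι → EuclideanSpace ℝ ι := fun x => WithLp.toLp 2 (f (P x.ofLp) - P x.ofLp)
  have huc : Continuous u := by
    have : Continuous fun x : EuclideanSpace ℝ ι => P x.ofLp := hPc.comp (PiLp.continuous_ofLp 2 _)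
    exact (PiLp.continuous_toLp 2 _).comp ((hf.comp this).sub this)
  have hcube : IsCompact (Set.univ.pi fun _ : ι => Set.Icc (-δ) δ) := isCompact_univ_pi fun _ => isCompact_Icc
  have hk : Continuous fun y : ι → ℝ => (WithLp.toLp 2 (f y - y) : EuclideanSpace ℝ ι) :=
    (PiLp.continuous_toLp 2 _).comp (hf.sub continuous_id)
  obtain ⟨C, hC⟩ := hcube.exists_bound_of_continuousOn hk.continuousOn
  obtain ⟨x, hx⟩ := bd_bdd_zero huc (C := C) (fun x => hC (P x.ofLp) (fun i _ => abs_le.1 (hP _ i)))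
  have hx' : ∀ i, x i + (f (P x.ofLp) i - P x.ofLp i) = 0 := by
    intro i
    have := congrArg (fun z : EuclideanSpace ℝ ι => z i) hx
    simpa [u] using this
  have hin : ∀ i, P x.ofLp i = x i := by
    intro i
    have h1 := hx' i
    rcases lt_trichotomy (x i) (-δ) with h | h | h
    · have hPi : P x.ofLp i = -δ := by
        simp only [P]; rw [max_eq_left]; exact (min_le_right _ _).trans h.le
      have := hlo _ (hP x.ofLp) i hPi
      rw [hPi] at h1; linarith
    · simp only [P]; rw [h, min_eq_right (by linarith), max_self]
    · rcases le_or_gt (x i) δ with h' | h'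
      · simp only [P]; rw [min_eq_right h', max_eq_right h.le]
      · have hPi : P x.ofLp i = δ := by
          simp only [P]; rw [min_eq_left h'.le, max_eq_right (by linarith)]
        have := hhi _ (hP x.ofLp) i hPi
        rw [hPi] at h1; linarith
  refine ⟨P x.ofLp, hP _, ?_⟩
  ext i
  have h1 := hx' i
  rw [hin i] at h1
  simp only [Pi.zero_apply]
  linarith
section Equi
variable {X : Type*} [NormedAddCommGroup X] [NormedSpace ℝ X]

noncomputable def bdF (δ : ℝ) : Finset ℝ := {1, -(1 - δ), -(1 + δ), -(2 * δ), 0, 2 * δ}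

lemma bd_box_max {k : ℕ} (v : Fin k → X) (s : Fin k → Set ℝ) (a : Fin k → ℝ) (ha : ∀ l, a l ∈ convexHull ℝ (s l)) (K : ℝ)
    (hK : ∀ b : Fin k → ℝ, (∀ l, b l ∈ s l) → ‖∑ l, b l • v l‖ ≤ K) : ‖∑ l, a l • v l‖ ≤ K := by
  have hconv : Convex ℝ {b : Fin k → ℝ | ‖∑ l, b l • v l‖ ≤ K} := by
    let T : (Fin k → ℝ) →ₗ[ℝ] X := Fintype.linearCombination ℝ v
    have : {b : Fin k → ℝ | ‖∑ l, b l • v l‖ ≤ K} = T ⁻¹' Metric.closedBall 0 K := by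
      ext b; simp [T, Fintype.linearCombination_apply]
    rw [this]
    exact (convex_closedBall 0 K).linear_preimage T
  have h1 : a ∈ convexHull ℝ (Set.univ.pi s) := by
    rw [convexHull_pi]; exact fun l _ => ha l
  have hsub : Set.univ.pi s ⊆ {b : Fin k → ℝ | ‖∑ l, b l • v l‖ ≤ K} := by
    intro b hb
    exact hK b fun l => hb l (Set.mem_univ l)
  exact convexHull_min hsub hconv h1

lemma bd_face_upper {k : ℕ} (v : Fin k → X) {M η δ c : ℝ} (hδ : 0 ≤ δ) (hM : 0 ≤ M) (hη : 0 ≤ η)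
    (hv : ∀ a : Fin k → ℝ, (∀ l, a l ∈ bdF δ) → 0 < ∑ l, a l ^ 2 →
      |‖∑ l, a l • v l‖ - M * √(∑ l, a l ^ 2)| ≤ η * M * √(∑ l, a l ^ 2))
    (hc : c ∈ bdF δ) {i j : Fin k} (hij : i ≠ j) (a : Fin k → ℝ) (haj : a j = 1) (hai : a i = c)
    (ha : ∀ l, l ≠ i → l ≠ j → |a l| ≤ 2 * δ) :
    ‖∑ l, a l • v l‖ ≤ (1 + η) * M * √(1 + c ^ 2 + 4 * k * δ ^ 2) := by
  apply bd_box_max v (fun l => if l = j then {1} else if l = i then {c} else {-(2 * δ), 2 * δ}) a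
  · intro l
    by_cases hlj : l = j
    · simp [hlj, haj]
    · by_cases hli : l = i
      · simp [hij, hli, hai]
      · simp only [hlj, hli, if_false]
        rw [convexHull_pair, segment_eq_Icc (by linarith)]
        exact abs_le.1 (ha l hli hlj)
  · intro b hb
    have hbF : ∀ l, b l ∈ bdF δ := by
      intro l
      have := hb l
      by_cases hlj : l = j
      · simp only [hlj, if_true, Set.mem_singleton_iff] at this ⊢
        rw [this]; simp [bdF]
      · by_cases hli : l = i
        · simp only [hlj, if_false, hli, if_true, Set.mem_singleton_iff, hij] at this ⊢
          rw [this]; exact hc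
        · simp only [hlj, hli, if_false, Set.mem_insert_iff, Set.mem_singleton_iff] at this
          rcases this with h | h <;> rw [h] <;> simp [bdF]
    have hbj : b j = 1 := by simpa using hb j
    have hpos : 0 < ∑ l, b l ^ 2 :=
      Finset.sum_pos' (fun l _ => sq_nonneg _) ⟨j, Finset.mem_univ _, by rw [hbj]; norm_num⟩
    have hle : ∑ l, b l ^ 2 ≤ 1 + c ^ 2 + 4 * k * δ ^ 2 := by
      have : ∀ l, b l ^ 2 ≤ (if l = j then 1 else 0) + (if l = i then c ^ 2 else 0) + 4 * δ ^ 2 := by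
        intro l
        have := hb l
        by_cases hlj : l = j
        · rw [hlj, hbj]; simp [hij.symm]; positivity
        · by_cases hli : l = i
          · simp only [hlj, if_false, hli, if_true, Set.mem_singleton_iff, hij] at this ⊢
            rw [this]; nlinarith
          · simp only [hlj, hli, if_false, Set.mem_insert_iff, Set.mem_singleton_iff] at this ⊢
            rcases this with h | h <;> rw [h] <;> nlinarith
      calc ∑ l, b l ^ 2 ≤ ∑ l, ((if l = j then 1 else 0) + (if l = i then c ^ 2 else 0) + 4 * δ ^ 2) := Finset.sum_le_sum fun l _ => this l
        _ = _ := by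
          simp [Finset.sum_add_distrib]; ring
    have h1 := (abs_le.1 (hv b hbF hpos)).2
    have h2 : √(∑ l, b l ^ 2) ≤ √(1 + c ^ 2 + 4 * k * δ ^ 2) := Real.sqrt_le_sqrt hle
    have h3 : (1 + η) * M * √(∑ l, b l ^ 2) ≤ (1 + η) * M * √(1 + c ^ 2 + 4 * k * δ ^ 2) := by gcongr
    linarith

lemma bd_face_lower {k : ℕ} (v : Fin k → X) {M η δ c : ℝ} (hδ : 0 ≤ δ) (hM : 0 ≤ M) (hη : 0 ≤ η)
    (hv : ∀ a : Fin k → ℝ, (∀ l, a l ∈ bdF δ) → 0 < ∑ l, a l ^ 2 →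
      |‖∑ l, a l • v l‖ - M * √(∑ l, a l ^ 2)| ≤ η * M * √(∑ l, a l ^ 2))
    (hc : c ∈ bdF δ) {i j : Fin k} (hij : i ≠ j) (a : Fin k → ℝ) (haj : a j = 1) (hai : a i = c)
    (ha : ∀ l, l ≠ i → l ≠ j → |a l| ≤ 2 * δ) :
    2 * ((1 - η) * M * √(1 + c ^ 2)) - (1 + η) * M * √(1 + c ^ 2 + 4 * k * δ ^ 2) ≤ ‖∑ l, a l • v l‖ := by
  let e : Fin k → ℝ := fun l => if l = j then 1 else if l = i then c else 0
  have hesum : ∑ l, e l ^ 2 = 1 + c ^ 2 := by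
    have : ∀ l, e l ^ 2 = (if l = j then 1 else 0) + (if l = i then c ^ 2 else 0) := by
      intro l
      by_cases hlj : l = j
      · simp [e, hlj, hij.symm]
      · by_cases hli : l = i <;> simp [e, hlj, hli, hij]
    simp [this, Finset.sum_add_distrib]
  have heF : ∀ l, e l ∈ bdF δ := by
    intro l
    simp only [e]
    split_ifs
    · simp [bdF]
    · exact hc
    · simp [bdF]
  have h1 := (abs_le.1 (hv e heF (by rw [hesum]; positivity))).1
  rw [hesum] at h1
  have h2 := bd_face_upper v hδ hM hη hv hc hij (fun l => 2 * e l - a l) (by simp [e, haj]; norm_num)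
    (by simp [e, hai, hij]; ring) (by
      intro l hli hlj
      simp only [e, hli, hlj, if_false]
      rw [mul_zero, zero_sub, abs_neg]; exact ha l hli hlj)
  have h3 : ∑ l, (2 * e l - a l) • v l = (2:ℝ) • ∑ l, e l • v l - ∑ l, a l • v l := by
    rw [Finset.smul_sum, ← Finset.sum_sub_distrib]
    refine Finset.sum_congr rfl fun l _ => ?_
    rw [sub_smul, mul_smul]
  rw [h3] at h2
  have h4 := norm_sub_norm_le ((2:ℝ) • ∑ l, e l • v l) (∑ l, a l • v l)
  rw [norm_smul, Real.norm_ofNat] at h4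
  linarith

lemma bd_num_upper {δ κ : ℝ} (hδ : 0 < δ) (hδ1 : δ ≤ 1 / 100) (hκ : κ ≤ 1 / 25 * δ) (hκ0 : 0 ≤ κ) :
    (1 + δ / 100) * √(1 + (-(1 - δ)) ^ 2 + κ) ≤ √2 := by
  apply Real.le_sqrt_of_sq_le
  rw [mul_pow, Real.sq_sqrt (by positivity)]
  nlinarith [mul_nonneg hδ.le hδ.le, mul_nonneg hδ.le hκ0, mul_pos (mul_pos hδ hδ) hδ]

lemma bd_num_lower {δ κ : ℝ} (hδ : 0 < δ) (hδ1 : δ ≤ 1 / 100) (hκ : κ ≤ 1 / 25 * δ) (hκ0 : 0 ≤ κ) :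
    √2 ≤ 2 * ((1 - δ / 100) * √(1 + (-(1 + δ)) ^ 2)) - (1 + δ / 100) * √(1 + (-(1 + δ)) ^ 2 + κ) := by
  have h2 : √2 ^ 2 = 2 := Real.sq_sqrt (by norm_num)
  have h20 : 0 ≤ √2 := Real.sqrt_nonneg 2
  have h21 : √2 ≤ 3 / 2 := by
    rw [Real.sqrt_le_left (by norm_num)]; norm_num
  set s := √(1 + (-(1 + δ)) ^ 2) with hs
  have hs2 : s ^ 2 = 1 + (-(1 + δ)) ^ 2 := Real.sq_sqrt (by positivity)
  have hs0 : 0 ≤ s := Real.sqrt_nonneg _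
  have hs1 : √2 + 3 / 5 * δ ≤ s := by
    apply Real.le_sqrt_of_sq_le
    nlinarith
  have hs3 : s ≤ 2 := by
    rw [hs, Real.sqrt_le_left (by norm_num)]; nlinarith
  have h12 : 1 ≤ √2 := by rw [Real.one_le_sqrt]; norm_num
  have hr : √(1 + (-(1 + δ)) ^ 2 + κ) ≤ s + 1 / 50 * δ := by
    rw [Real.sqrt_le_left (by positivity)]
    nlinarith
  nlinarith [mul_nonneg hδ.le hs0]

lemma bd_equi {k : ℕ} (v : Fin k → X) {M δ : ℝ} (hδ : 0 < δ) (hδ1 : δ ≤ 1 / 100) (hkδ : k * δ ≤ 1 / 100) (hM : 0 ≤ M)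
    (hv : ∀ a : Fin k → ℝ, (∀ l, a l ∈ bdF δ) → 0 < ∑ l, a l ^ 2 →
      |‖∑ l, a l • v l‖ - M * √(∑ l, a l ^ 2)| ≤ δ / 100 * M * √(∑ l, a l ^ 2)) :
    ∃ x : Fin k → X, ∀ i j, i < j → ‖x j - x i‖ = M * √2 := by
  let ι := {p : Fin k × Fin k // p.1 < p.2}
  let T : (ι → ℝ) → Fin k → Fin k → ℝ := fun θ i j => if h : i < j then θ ⟨(i, j), h⟩ else 0
  have hTc : ∀ i j, Continuous fun θ => T θ i j := by
    intro i j
    by_cases h : i < j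
    · simp only [T, h, dif_pos]; exact continuous_apply _
    · simp only [T, h, dif_neg, not_false_iff]; exact continuous_const
  let x : (ι → ℝ) → Fin k → X := fun θ j => v j + ∑ l, T θ l j • v l
  have hxc : ∀ j, Continuous fun θ => x θ j := by
    intro j
    have := fun l => hTc l j
    simp only [x]; fun_prop
  let a : (ι → ℝ) → Fin k → Fin k → Fin k → ℝ := fun θ i j l =>
    (if l = j then 1 else 0) - (if l = i then 1 else 0) + (T θ l j - T θ l i)
  have hxa : ∀ θ i j, x θ j - x θ i = ∑ l, a θ i j l • v l := by
    intro θ i j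
    simp only [x, a, add_smul, sub_smul, Finset.sum_add_distrib, Finset.sum_sub_distrib, ite_smul, one_smul, zero_smul,
      Finset.sum_ite_eq', Finset.mem_univ, if_true]
    abel
  have hTb : ∀ θ : ι → ℝ, (∀ p, |θ p| ≤ δ) → ∀ i j, |T θ i j| ≤ δ := by
    intro θ hθ i j
    simp only [T]
    split_ifs
    · exact hθ _
    · simpa using hδ.le
  have haj : ∀ θ i j, i < j → a θ i j j = 1 := by
    intro θ i j hij
    simp [a, T, hij.ne', not_lt.2 hij.le]
  have hai : ∀ θ i j, (h : i < j) → a θ i j i = -(1 - θ ⟨(i, j), h⟩) := by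
    intro θ i j hij
    simp [a, T, hij.ne, hij]
    ring
  have hal : ∀ θ : ι → ℝ, (∀ p, |θ p| ≤ δ) → ∀ i j l, l ≠ i → l ≠ j → |a θ i j l| ≤ 2 * δ := by
    intro θ hθ i j l hli hlj
    simp only [a, hli, hlj, if_false, sub_zero, zero_add]
    have h1 := hTb θ hθ l j
    have h2 := hTb θ hθ l i
    exact (abs_sub _ _).trans (by linarith)
  have hκ : 4 * k * δ ^ 2 ≤ 1 / 25 * δ := by nlinarith
  have hκ0 : 0 ≤ 4 * k * δ ^ 2 := by positivity
  obtain ⟨θ, hθ, hz⟩ := bd_miranda hδ.le (fun θ (p : ι) => M * √2 - ‖x θ p.1.2 - x θ p.1.1‖) (by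
      apply continuous_pi; intro p
      exact continuous_const.sub ((hxc _).sub (hxc _)).norm) (by
      rintro θ hθ ⟨⟨i, j⟩, hij⟩ hp
      have hij : i < j := hij
      have hai' : a θ i j i = -(1 + δ) := by rw [hai θ i j hij, hp]; ring
      have := bd_face_lower v hδ.le hM (by positivity) hv (c := -(1 + δ)) (by simp [bdF]) hij.ne (a θ i j) (haj θ i j hij) hai' (hal θ hθ i j)
      have h2 := mul_le_mul_of_nonneg_left (bd_num_lower hδ hδ1 hκ hκ0) hM
      simp only [hxa]
      linarith) (by
      rintro θ hθ ⟨⟨i, j⟩, hij⟩ hp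
      have hij : i < j := hij
      have hai' : a θ i j i = -(1 - δ) := by rw [hai θ i j hij, hp]
      have := bd_face_upper v hδ.le hM (by positivity) hv (c := -(1 - δ)) (by simp [bdF]) hij.ne (a θ i j) (haj θ i j hij) hai' (hal θ hθ i j)
      have h2 := mul_le_mul_of_nonneg_left (bd_num_upper hδ hδ1 hκ hκ0) hM
      simp only [hxa]
      linarith)
  refine ⟨x θ, fun i j hij => ?_⟩
  have := congrFun hz ⟨(i, j), hij⟩
  simp only [Pi.zero_apply] at this
  linarith

end Equi
section Fin1
open MeasureTheory ProbabilityTheory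

lemma bd_mean_big {m : ℕ} {X : Type*} [NormedAddCommGroup X] [NormedSpace ℝ X] (L : EuclideanSpace ℝ (Fin m) →L[ℝ] X)
    (hL : ∀ i, 1 / 4 ≤ ‖L (EuclideanSpace.single i 1)‖) (hm : 5 ≤ Real.log m) :
    Real.log m / 256 ≤ (∫ x, ‖L x‖ ∂stdGaussian (EuclideanSpace ℝ (Fin m))) ^ 2 := by
  have hm0 : (0:ℝ) < m := by
    rcases Nat.eq_zero_or_pos m with h | h
    · rw [h] at hm; norm_num at hm
    · exact_mod_cast h
  have hs2 : 2 ≤ √(Real.log m) := Real.le_sqrt_of_sq_le (by linarith)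
  have hsq : √(Real.log m) ^ 2 = Real.log m := Real.sq_sqrt (by linarith)
  have h := bd_mean_lower L hL (t := √(Real.log m) - 1) (by linarith) (by
    rw [sub_add_cancel, neg_div, hsq]
    have h1 : (m:ℝ) * Real.exp (-(Real.log m / 2)) = Real.exp (Real.log m / 2) := by
      nth_rw 1 [← Real.exp_log hm0]
      rw [← Real.exp_add]; congr 1; ring
    rw [h1]
    have := Real.add_one_le_exp (Real.log m / 2)
    linarith)
  have h2 : √(Real.log m) / 16 ≤ ∫ x, ‖L x‖ ∂stdGaussian (EuclideanSpace ℝ (Fin m)) := by linarith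
  calc Real.log m / 256 = (√(Real.log m) / 16) ^ 2 := by rw [div_pow, hsq]; norm_num
    _ ≤ _ := by gcongr

lemma bd_core {n k : ℕ} (hk : 1 ≤ k) {X : Type*} [NormedAddCommGroup X] [NormedSpace ℝ X] (hX : Module.finrank ℝ X = n)
    (hlog : 100 ≤ Real.log n) (hkn : 2 * 10 ^ 12 * (k:ℝ) ^ 3 ≤ Real.log n) :
    ∃ x : Fin k → X, ∃ lam : ℝ, 0 < lam ∧ ∀ i j, i < j → ‖x j - x i‖ = lam := by
  have hn2 : 2 ≤ n := by
    by_contra! h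
    have : n = 0 ∨ n = 1 := by omega
    rcases this with h | h <;> rw [h] at hlog <;> norm_num at hlog
  have hnR : (0:ℝ) < n := by exact_mod_cast (by omega : 0 < n)
  obtain ⟨L, hL1, hL2⟩ := bd_dvoretzky_rogers (n := n) (m := n / 2) (by omega) hX (by omega)
  have hm4 : (n:ℝ) / 4 ≤ ((n / 2 : ℕ) : ℝ) := by
    rw [div_le_iff₀ (by norm_num)]
    have : n ≤ (n / 2) * 4 := by omega
    exact_mod_cast this
  have hlm : Real.log n / 2 ≤ Real.log ((n / 2 : ℕ) : ℝ) := by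
    have h1 := Real.log_le_log (by positivity) hm4
    rw [Real.log_div hnR.ne' (by norm_num)] at h1
    have h2 := Real.log_le_sub_one_of_pos (show (0:ℝ) < 4 by norm_num)
    linarith
  have hM2 := bd_mean_big L hL2 (by linarith)
  set M := ∫ x, ‖L x‖ ∂stdGaussian (EuclideanSpace ℝ (Fin (n / 2))) with hM
  have hM0 : 0 ≤ M := integral_nonneg fun x => norm_nonneg _
  have hMpos : 0 < M := by
    rcases hM0.eq_or_lt with h | h
    · rw [← h] at hM2; norm_num at hM2; linarith
    · exact h
  have hkR : (1:ℝ) ≤ k := by exact_mod_cast hk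
  set δ : ℝ := 1 / (100 * k) with hδ
  have hδ0 : 0 < δ := by positivity
  have hkδ : k * δ = 1 / 100 := by rw [hδ]; field_simp
  have hδ1 : δ ≤ 1 / 100 := by nlinarith
  let A : Finset (Fin k → ℝ) := (Fintype.piFinset fun _ : Fin k => bdF δ).filter fun a => 0 < ∑ i, a i ^ 2
  have hAcard : (A.card : ℝ) ≤ 6 ^ k := by
    have h1 : A.card ≤ (Fintype.piFinset fun _ : Fin k => bdF δ).card := Finset.card_filter_le _ _
    rw [Fintype.card_piFinset] at h1
    simp only [Finset.prod_const, Finset.card_univ, Fintype.card_fin] at h1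
    have h2 : (bdF δ).card ≤ 6 := Finset.card_le_six
    have h3 := h1.trans (Nat.pow_le_pow_left h2 k)
    exact_mod_cast h3
  have hexp : (A.card : ℝ) * (2 * Real.exp (-((δ / 100 * M) ^ 2 / 8))) < 1 := by
    have h3k : 3 * (k:ℝ) ≤ (δ / 100 * M) ^ 2 / 8 := by
      have e1 : (δ / 100 * M) ^ 2 = M ^ 2 / (10 ^ 8 * k ^ 2) := by
        rw [hδ]; field_simp; norm_num
      rw [e1, div_div, le_div_iff₀ (by positivity)]
      have h512 : Real.log n / 512 ≤ M ^ 2 := by linarith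
      nlinarith [hkn, h512, (by positivity : (0:ℝ) < (k:ℝ) ^ 3)]
    have h4 : Real.exp (-((δ / 100 * M) ^ 2 / 8)) ≤ Real.exp (-(3 * k)) := Real.exp_le_exp.2 (by linarith)
    have h5 : (12:ℝ) < Real.exp 3 := by
      have h6 := Real.exp_one_gt_d9
      have : Real.exp 3 = Real.exp 1 ^ 3 := by rw [← Real.exp_nat_mul]; norm_num
      rw [this]
      calc (12:ℝ) < 2.7 ^ 3 := by norm_num
        _ ≤ _ := by gcongr; linarith
    calc (A.card : ℝ) * (2 * Real.exp (-((δ / 100 * M) ^ 2 / 8))) ≤ 6 ^ k * (2 ^ k * Real.exp (-(3 * k))) := by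
          gcongr
          exact le_self_pow₀ (by norm_num) (by omega)
      _ = (12 / Real.exp 3) ^ k := by
          rw [div_pow, ← mul_assoc, ← mul_pow, ← Real.exp_nat_mul, Real.exp_neg, mul_comm 3, div_eq_mul_inv]; norm_num
      _ < 1 := pow_lt_one₀ (by positivity) ((div_lt_one (Real.exp_pos 3)).2 h5) (by omega)
  obtain ⟨v, hv⟩ := bd_union L hL1 hM (by positivity) A (fun a ha => (Finset.mem_filter.1 ha).2) hexp
  obtain ⟨x, hx⟩ := bd_equi v hδ0 hδ1 hkδ.le hM0 (fun a ha hpos => hv a (Finset.mem_filter.2 ⟨Fintype.mem_piFinset.2 ha, hpos⟩))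
  exact ⟨x, M * √2, by positivity, hx⟩

end Fin1

open Module

theorem brass_dekster_lower_bound :
    ∃ c : ℝ, 0 < c ∧ ∃ n₀ : ℕ, ∀ n : ℕ, n₀ ≤ n →
      ∀ (X : Type) [NormedAddCommGroup X] [NormedSpace ℝ X],
        finrank ℝ X = n →
        ∃ S : Finset X,
          c * (Real.log n) ^ ((1 : ℝ) / 3) ≤ (S.card : ℝ) ∧
          ∃ lam : ℝ, 0 < lam ∧ ∀ x ∈ S, ∀ y ∈ S, x ≠ y → ‖x - y‖ = lam := by
  refine ⟨1 / 10 ^ 5, by positivity, ⌈Real.exp (10 ^ 15)⌉₊, fun n hn X _ _ hX => ?_⟩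
  have h1 : Real.exp (10 ^ 15) ≤ n := Nat.ceil_le.1 hn
  have hlog : (10:ℝ) ^ 15 ≤ Real.log n := by
    rw [Real.le_log_iff_exp_le ((Real.exp_pos _).trans_le h1)]; exact h1
  have hl0 : 0 ≤ Real.log n := le_trans (by positivity) hlog
  set y := (Real.log n) ^ ((1 : ℝ) / 3) with hy
  have hy3 : y ^ 3 = Real.log n := by
    rw [hy, ← Real.rpow_natCast, ← Real.rpow_mul hl0]; norm_num
  have hy0 : 0 ≤ y := Real.rpow_nonneg hl0 _
  have hy5 : 10 ^ 5 ≤ y := by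
    by_contra! h
    have : y ^ 3 < (10 ^ 5) ^ 3 := by gcongr
    rw [hy3] at this
    norm_num at this hlog
    linarith
  set k := ⌈1 / 10 ^ 5 * y⌉₊ with hk
  have hk1 : 1 / 10 ^ 5 * y ≤ k := Nat.le_ceil _
  have hk2 : (k:ℝ) < 1 / 10 ^ 5 * y + 1 := Nat.ceil_lt_add_one (by positivity)
  have hk3 : 1 ≤ k := by
    rw [hk, Nat.one_le_ceil_iff]; positivity
  have hk4 : (k:ℝ) ≤ 2 / 10 ^ 5 * y := by
    norm_num at hk2 hy5 ⊢; linarith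
  have hk5 : (k:ℝ) ^ 3 ≤ (2 / 10 ^ 5 * y) ^ 3 := by gcongr
  obtain ⟨x, lam, hlam, hx⟩ := bd_core hk3 hX (by norm_num at hlog ⊢; linarith) (by
    rw [mul_pow, hy3] at hk5
    norm_num at hk5 ⊢
    linarith)
  have hx' : ∀ i j, i ≠ j → ‖x i - x j‖ = lam := by
    intro i j hij
    rcases lt_or_gt_of_ne hij with h | h
    · rw [norm_sub_rev]; exact hx i j h
    · exact hx j i h
  have hinj : Function.Injective x := by
    intro i j hij
    by_contra h
    have := hx' i j h
    rw [hij, sub_self, norm_zero] at this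
    linarith
  refine ⟨Finset.univ.map ⟨x, hinj⟩, ?_, lam, hlam, ?_⟩
  · rw [Finset.card_map, Finset.card_univ, Fintype.card_fin]; exact hk1
  · intro a ha b hb hab
    obtain ⟨i, _, rfl⟩ := Finset.mem_map.1 ha
    obtain ⟨j, _, rfl⟩ := Finset.mem_map.1 hb
    exact hx' i j fun h => hab (by rw [h])
end

section
/- For each n ≥ 1, the maximum size of an equilateral set in ℓ_4^n is exactly n + 1: every equilateral subset of ℓ_4^n has at most n + 1 elements, and there exists an equilateral subset of ℓ_4^n with exactly n + 1 elements. -/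
theorem l4_norm_pow {n : ℕ} (x : PiLp 4 (fun _ : Fin n => ℝ)) : ‖x‖ ^ 4 = ∑ k, (x k) ^ 4 := by
  have h4 : (4 : ENNReal).toReal = ((4 : ℕ) : ℝ) := by simp
  have h0 : 0 ≤ ∑ k, (x k) ^ 4 := Finset.sum_nonneg fun k _ => by positivity
  rw [PiLp.norm_eq_sum (by rw [h4]; norm_num), h4]
  have : ∑ i, ‖x i‖ ^ ((4 : ℕ) : ℝ) = ∑ k, (x k) ^ 4 := by
    refine Finset.sum_congr rfl fun k _ => ?_
    rw [Real.rpow_natCast, Real.norm_eq_abs, Even.pow_abs (by decide)]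
  rw [this, one_div, Real.rpow_inv_natCast_pow h0 (by norm_num)]

theorem l4_upper {n : ℕ} (S : Finset (PiLp 4 (fun _ : Fin n => ℝ))) (lam : ℝ) (hl : 0 < lam)
    (h : ∀ x ∈ S, ∀ y ∈ S, x ≠ y → ‖x - y‖ = lam) : S.card ≤ n + 1 := by
  classical
  haveI : Fact ((1 : ENNReal) ≤ 4) := ⟨by norm_num⟩
  by_contra! hc
  have hfr : Module.finrank ℝ (PiLp 4 (fun _ : Fin n => ℝ)) = n := by
    rw [(WithLp.linearEquiv 4 ℝ (Fin n → ℝ)).finrank_eq]; simp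
  obtain ⟨f, h1, h0, z, hz, hfz⟩ :=
    Module.exists_nontrivial_relation_sum_zero_of_finrank_succ_lt_card (R := ℝ) (t := S)
      (by rw [hfr]; exact hc)
  have h1k : ∀ k, ∑ x ∈ S, f x * x k = 0 := by
    intro k
    have := congrArg (fun v : PiLp 4 (fun _ : Fin n => ℝ) => v k) h1
    simpa using this
  have hA : ∑ x ∈ S, ∑ y ∈ S, f x * f y * ‖x - y‖ ^ 4 = - lam ^ 4 * ∑ x ∈ S, f x ^ 2 := by
    have : ∀ x ∈ S, ∑ y ∈ S, f x * f y * ‖x - y‖ ^ 4 = - lam ^ 4 * f x ^ 2 := by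
      intro x hx
      have e : ∀ y ∈ S, f x * f y * ‖x - y‖ ^ 4
          = f x * lam ^ 4 * f y - (if x = y then lam ^ 4 * f x ^ 2 else 0) := by
        intro y hy
        split_ifs with hxy
        · subst hxy; simp; ring
        · rw [h x hx y hy hxy]; ring
      rw [Finset.sum_congr rfl e, Finset.sum_sub_distrib, ← Finset.mul_sum, h0,
        Finset.sum_ite_eq, if_pos hx]
      ring
    rw [Finset.sum_congr rfl this, Finset.mul_sum]
  have hB : ∑ x ∈ S, ∑ y ∈ S, f x * f y * ‖x - y‖ ^ 4
      = ∑ k, 6 * (∑ x ∈ S, f x * x k ^ 2) ^ 2 := by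
    have : ∀ k, ∑ x ∈ S, ∑ y ∈ S, f x * f y * (x k - y k) ^ 4
        = 6 * (∑ x ∈ S, f x * x k ^ 2) ^ 2 := by
      intro k
      have e : ∀ x y : PiLp 4 (fun _ : Fin n => ℝ), f x * f y * (x k - y k) ^ 4 =
          (f x * x k ^ 4) * f y - 4 * (f x * x k ^ 3) * (f y * y k)
          + 6 * (f x * x k ^ 2) * (f y * y k ^ 2) - 4 * (f x * x k) * (f y * y k ^ 3)
          + f x * (f y * y k ^ 4) := by intros; ring
      simp only [e, Finset.sum_add_distrib, Finset.sum_sub_distrib, ← Finset.mul_sum,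
        ← Finset.sum_mul, h0, h1k]
      ring
    simp only [← this, l4_norm_pow, PiLp.sub_apply, Finset.mul_sum]
    rw [Finset.sum_comm (s := Finset.univ)]
    refine Finset.sum_congr rfl fun x _ => ?_
    rw [Finset.sum_comm]
  have hp : 0 < ∑ x ∈ S, f x ^ 2 :=
    Finset.sum_pos' (fun _ _ => sq_nonneg _) ⟨z, hz, by positivity⟩
  have hq : 0 ≤ ∑ k, 6 * (∑ x ∈ S, f x * x k ^ 2) ^ 2 :=
    Finset.sum_nonneg fun k _ => by positivity
  rw [← hB, hA] at hq
  have : 0 < lam ^ 4 * ∑ x ∈ S, f x ^ 2 := by positivity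
  linarith

theorem l4_lower (n : ℕ) (hn : 1 ≤ n) : ∃ S : Finset (PiLp 4 (fun _ : Fin n => ℝ)),
      S.card = n + 1 ∧
      ∃ lam : ℝ, 0 < lam ∧ ∀ x ∈ S, ∀ y ∈ S, x ≠ y → ‖x - y‖ = lam := by
  classical
  haveI : Fact ((1 : ENNReal) ≤ 4) := ⟨by norm_num⟩
  have hn' : (1 : ℝ) ≤ n := by exact_mod_cast hn
  obtain ⟨c, -, hc⟩ : ∃ c ∈ Set.Icc (-1 : ℝ) 0, ((n : ℝ) - 1) * c ^ 4 + (1 - c) ^ 4 = 2 := by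
    have := intermediate_value_Icc' (a := (-1 : ℝ)) (b := 0) (by norm_num)
      (f := fun c : ℝ => ((n : ℝ) - 1) * c ^ 4 + (1 - c) ^ 4) (by fun_prop)
    have h2 := this (show (2 : ℝ) ∈ _ by constructor <;> norm_num; linarith)
    simpa using h2
  let g : Option (Fin n) → PiLp 4 (fun _ : Fin n => ℝ) := fun o =>
    o.elim (WithLp.toLp 4 fun _ => c) (fun i => WithLp.toLp 4 (Pi.single i 1))
  let lam : ℝ := √(√2)
  have hl : 0 < lam := by positivity
  have hl4 : lam ^ 4 = 2 := by
    have : lam ^ 4 = (lam ^ 2) ^ 2 := by ring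
    rw [this, Real.sq_sqrt (by positivity), Real.sq_sqrt (by norm_num)]
  have key : ∀ v : PiLp 4 (fun _ : Fin n => ℝ), ∑ k, (v k) ^ 4 = 2 → ‖v‖ = lam := by
    intro v hv
    rw [← l4_norm_pow, ← hl4] at hv
    exact (pow_left_inj₀ (norm_nonneg v) hl.le (n := 4) (by norm_num)).1 hv
  have hns : ∀ i, ‖g none - g (some i)‖ = lam := by
    intro i
    apply key
    have : ∀ k, ((g none - g (some i)) k) ^ 4 = c ^ 4 + if k = i then (1 - c) ^ 4 - c ^ 4 else 0 := by
      intro k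
      simp only [g, PiLp.sub_apply, Option.elim, Pi.single_apply]
      split_ifs <;> ring
    simp only [this, Finset.sum_add_distrib, Finset.sum_ite_eq', Finset.mem_univ, if_true]
    simp
    linarith
  have hss : ∀ i j, i ≠ j → ‖g (some i) - g (some j)‖ = lam := by
    intro i j hij
    apply key
    have : ∀ k, ((g (some i) - g (some j)) k) ^ 4
        = (if k = i then 1 else 0) + if k = j then 1 else 0 := by
      intro k
      simp only [g, PiLp.sub_apply, Option.elim, Pi.single_apply]
      split_ifs with h1 h2
      · exact absurd (h1.symm.trans h2) hij
      all_goals norm_num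
    simp only [this, Finset.sum_add_distrib, Finset.sum_ite_eq', Finset.mem_univ, if_true]
    norm_num
  have hg : ∀ a b, a ≠ b → ‖g a - g b‖ = lam := by
    rintro (_ | i) (_ | j) hab
    · exact absurd rfl hab
    · exact hns j
    · rw [norm_sub_rev]; exact hns i
    · exact hss i j (fun h => hab (by rw [h]))
  have hinj : Function.Injective g := by
    intro a b hab
    by_contra hne
    have := hg a b hne
    rw [hab, sub_self, norm_zero] at this
    exact hl.ne this
  refine ⟨Finset.univ.image g, ?_, lam, hl, ?_⟩
  · rw [Finset.card_image_of_injective _ hinj]; simp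
  · intro x hx y hy hxy
    obtain ⟨a, -, rfl⟩ := Finset.mem_image.1 hx
    obtain ⟨b, -, rfl⟩ := Finset.mem_image.1 hy
    exact hg a b (fun h => hxy (by rw [h]))

theorem equilateral_l4
    (n : ℕ) (hn : 1 ≤ n) :
    (∀ S : Finset (PiLp 4 (fun _ : Fin n => ℝ)),
      (∃ lam : ℝ, 0 < lam ∧ ∀ x ∈ S, ∀ y ∈ S, x ≠ y → ‖x - y‖ = lam) →
      S.card ≤ n + 1) ∧
    (∃ S : Finset (PiLp 4 (fun _ : Fin n => ℝ)),
      S.card = n + 1 ∧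
      ∃ lam : ℝ, 0 < lam ∧ ∀ x ∈ S, ∀ y ∈ S, x ≠ y → ‖x - y‖ = lam) :=
  ⟨fun S ⟨lam, hl, h⟩ => l4_upper S lam hl h, l4_lower n hn⟩
end

section
/- Let p be a positive even integer and n ≥ 1. Then every equilateral subset of ℓ_p^n has cardinality at most (p/2 − 1)·n + 1 if p ≡ 0 (mod 4), and at most (p/2)·n + 1 if p ≡ 2 (mod 4). -/
open scoped ENNReal

lemma eq_aux_form {ι : Type*} [Fintype ι] (c t : ι → ℝ) (h : ℕ)
    (h0 : ∀ k < h, ∑ x, c x * t x ^ k = 0)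
    (h1 : Even h ∨ ∑ x, c x * t x ^ h = 0) :
    0 ≤ ∑ x, ∑ y, c x * c y * (t x - t y) ^ (2 * h) := by
  have key : ∑ x, ∑ y, c x * c y * (t x - t y) ^ (2 * h)
      = ∑ m ∈ Finset.range (2 * h + 1), (-1) ^ (2 * h - m) * ((2 * h).choose m : ℝ) *
        ((∑ x, c x * t x ^ m) * (∑ y, c y * t y ^ (2 * h - m))) := by
    have e1 : ∀ x y, c x * c y * (t x - t y) ^ (2 * h)
        = ∑ m ∈ Finset.range (2 * h + 1), (-1) ^ (2 * h - m) * ((2 * h).choose m : ℝ) *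
          ((c x * t x ^ m) * (c y * t y ^ (2 * h - m))) := by
      intro x y
      rw [sub_eq_add_neg, add_pow, Finset.mul_sum]
      refine Finset.sum_congr rfl fun m _ => ?_
      rw [neg_pow (t y)]
      ring
    have e2 : ∀ x, ∑ y, c x * c y * (t x - t y) ^ (2 * h)
        = ∑ m ∈ Finset.range (2 * h + 1), ∑ y, (-1) ^ (2 * h - m) * ((2 * h).choose m : ℝ) *
          ((c x * t x ^ m) * (c y * t y ^ (2 * h - m))) := by
      intro x
      rw [Finset.sum_comm]
      exact Finset.sum_congr rfl fun y _ => e1 x y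
    rw [Finset.sum_congr rfl fun x _ => e2 x, Finset.sum_comm]
    refine Finset.sum_congr rfl fun m _ => ?_
    rw [Finset.sum_mul_sum, Finset.mul_sum]
    refine Finset.sum_congr rfl fun x _ => ?_
    rw [Finset.mul_sum]
  rw [key]
  refine Finset.sum_nonneg fun m hm => ?_
  rw [Finset.mem_range] at hm
  rcases lt_trichotomy m h with hlt | rfl | hgt
  · rw [h0 m hlt]; simp
  · have e : 2 * m - m = m := by omega
    rw [e]
    rcases h1 with h1 | h1
    · rw [h1.neg_one_pow]
      exact mul_nonneg (by positivity) (mul_self_nonneg _)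
    · rw [h1]; simp
  · rw [h0 (2 * h - m) (by omega)]; simp

lemma eq_aux_card (h n M : ℕ) (hh : 0 < h) (hM : M = h ∨ (M + 1 = h ∧ Even h))
    (S : Finset (PiLp ((2 * h : ℕ) : ℝ≥0∞) (fun _ : Fin n => ℝ))) (lam : ℝ) (hlam : 0 < lam)
    (hS : ∀ x ∈ S, ∀ y ∈ S, x ≠ y → ‖x - y‖ = lam) :
    S.card ≤ M * n + 1 := by
  classical
  let T : (S → ℝ) →ₗ[ℝ] (Option (Fin M × Fin n) → ℝ) :=
    LinearMap.pi fun o => match o with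
      | none => ∑ x : S, LinearMap.proj x
      | some (k, i) => ∑ x : S, (x.1 i ^ (k.1 + 1)) • LinearMap.proj x
  have hT0 : ∀ c, T c none = ∑ x, c x := by intro c; simp [T]
  have hT1 : ∀ c k i, T c (some (k, i)) = ∑ x : S, c x * x.1 i ^ (k.1 + 1) := by
    intro c k i; simp [T, mul_comm]
  have hinj : Function.Injective T := by
    rw [injective_iff_map_eq_zero]
    intro c hc
    have s0 : ∑ x, c x = 0 := by rw [← hT0, hc]; rfl
    have s1 : ∀ k, k < M → ∀ i, ∑ x : S, c x * x.1 i ^ (k + 1) = 0 := by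
      intro k hk i
      rw [← hT1 c ⟨k, hk⟩ i, hc]; rfl
    have s2 : ∀ k, k ≤ M → ∀ i, ∑ x : S, c x * x.1 i ^ k = 0 := by
      intro k hk i
      cases k with
      | zero => simpa using s0
      | succ k => exact s1 k hk i
    have nn : 0 ≤ ∑ i : Fin n, ∑ x : S, ∑ y : S, c x * c y * (x.1 i - y.1 i) ^ (2 * h) := by
      refine Finset.sum_nonneg fun i _ => eq_aux_form c (fun x : S => x.1 i) h ?_ ?_
      · intro k hk; exact s2 k (by omega) i
      · rcases hM with hM | hM
        · right; exact s2 h (by omega) i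
        · left; exact hM.2
    have dist : ∀ x y : S, ∑ i : Fin n, (x.1 i - y.1 i) ^ (2 * h)
        = if x = y then 0 else lam ^ (2 * h) := by
      intro x y
      split_ifs with hxy
      · subst hxy; simp [hh.ne']
      · have hne : x.1 ≠ y.1 := fun e => hxy (Subtype.ext e)
        rw [← hS x.1 x.2 y.1 y.2 hne]
        have hp : 0 < ((2 * h : ℕ) : ℝ≥0∞).toReal := by simp [hh]
        have hnn : 0 ≤ ∑ i : Fin n, (x.1 i - y.1 i) ^ (2 * h) :=
          Finset.sum_nonneg fun i _ => (even_two_mul h).pow_nonneg _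
        rw [PiLp.norm_eq_sum hp]
        simp only [ENNReal.toReal_natCast, Real.rpow_natCast, PiLp.sub_apply, Real.norm_eq_abs,
          (even_two_mul h).pow_abs]
        rw [one_div, Real.rpow_inv_natCast_pow hnn (by omega)]
    have eq : ∑ i : Fin n, ∑ x : S, ∑ y : S, c x * c y * (x.1 i - y.1 i) ^ (2 * h)
        = - (lam ^ (2 * h) * ∑ x : S, c x ^ 2) := by
      rw [Finset.sum_comm]
      have : ∀ x : S, ∑ i : Fin n, ∑ y : S, c x * c y * (x.1 i - y.1 i) ^ (2 * h)
          = - (lam ^ (2 * h) * c x ^ 2) := by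
        intro x
        rw [Finset.sum_comm]
        simp_rw [← Finset.mul_sum, dist]
        have : ∀ y : S, c x * c y * (if x = y then 0 else lam ^ (2 * h))
            = c x * lam ^ (2 * h) * c y - (if x = y then c x * c y * lam ^ (2 * h) else 0) := by
          intro y; split_ifs <;> ring
        simp_rw [this, Finset.sum_sub_distrib, ← Finset.mul_sum, s0]
        simp
        ring
      simp_rw [this, Finset.sum_neg_distrib, Finset.mul_sum]
    rw [eq] at nn
    have hl : 0 < lam ^ (2 * h) := by positivity
    have hz : ∑ x : S, c x ^ 2 = 0 := by
      have : 0 ≤ ∑ x : S, c x ^ 2 := Finset.sum_nonneg fun _ _ => sq_nonneg _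
      nlinarith
    rw [Finset.sum_eq_zero_iff_of_nonneg (fun _ _ => sq_nonneg _)] at hz
    funext x
    simpa using hz x (Finset.mem_univ x)
  have := LinearMap.finrank_le_finrank_of_injective hinj
  simpa using this

theorem equilateral_lp_even
    (p : ℕ) (hp : 0 < p) (hpeven : Even p) (n : ℕ) (hn : 1 ≤ n)
    (S : Finset (PiLp (p : ℝ≥0∞) (fun _ : Fin n => ℝ)))
    (hS : ∃ lam : ℝ, 0 < lam ∧ ∀ x ∈ S, ∀ y ∈ S, x ≠ y → ‖x - y‖ = lam) :
    (p % 4 = 0 → S.card ≤ (p / 2 - 1) * n + 1) ∧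
    (p % 4 = 2 → S.card ≤ (p / 2) * n + 1) := by
  obtain ⟨lam, hlam, hS⟩ := hS
  obtain ⟨h, rfl⟩ : ∃ h, p = 2 * h := ⟨p / 2, by have := Nat.even_iff.mp hpeven; omega⟩
  have e : 2 * h / 2 = h := by omega
  rw [e]
  refine ⟨fun h4 => ?_, fun _ => ?_⟩
  · exact eq_aux_card h n (h - 1) (by omega)
      (Or.inr ⟨by omega, Nat.even_iff.mpr (by omega)⟩) S lam hlam hS
  · exact eq_aux_card h n h (by omega) (Or.inl rfl) S lam hlam hS
end

section
/- Let A be a real symmetric n × n matrix that is not the zero matrix. Then (Σ_{i=1}^n A_{ii})² ≤ (rank A) · Σ_{i,j=1}^n A_{ij}²; equivalently, rank A ≥ (trace A)² / Σ_{i,j} A_{ij}². -/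
theorem rank_lemma
    (n : ℕ) (A : Matrix (Fin n) (Fin n) ℝ)
    (hsymm : A.transpose = A) (hne : A ≠ 0) :
    (∑ i, A i i) ^ 2 ≤ (A.rank : ℝ) * ∑ i, ∑ j, A i j ^ 2 := by
  have hA : A.IsHermitian := by
    rw [Matrix.IsHermitian, Matrix.conjTranspose_eq_transpose_of_trivial, hsymm]
  have h1 : ∑ i, A i i = ∑ i, hA.eigenvalues i := by
    have := hA.trace_eq_sum_eigenvalues
    simpa [Matrix.trace] using this
  have h2 : ∑ i, ∑ j, A i j ^ 2 = (A * A).trace := by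
    simp only [Matrix.trace, Matrix.diag, Matrix.mul_apply]
    refine Finset.sum_congr rfl fun i _ => Finset.sum_congr rfl fun j _ => ?_
    have : A j i = A i j := congrFun (congrFun hsymm i) j
    rw [this, sq]
  have h3 : (A * A).trace = ∑ i, hA.eigenvalues i ^ 2 := by
    have hs := hA.spectral_theorem
    set D : Matrix (Fin n) (Fin n) ℝ := Matrix.diagonal (RCLike.ofReal ∘ hA.eigenvalues) with hD
    have : A * A = Unitary.conjStarAlgAut ℝ _ hA.eigenvectorUnitary (D * D) := by
      rw [map_mul, ← hs]
    rw [this, Unitary.conjStarAlgAut_apply, Matrix.trace_mul_comm, ← mul_assoc]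
    simp [hD, Matrix.trace, sq]
  have h4 : (A.rank : ℝ) = ((Finset.univ.filter fun i => hA.eigenvalues i ≠ 0).card : ℝ) := by
    rw [hA.rank_eq_card_non_zero_eigs, Fintype.card_subtype]
  rw [h1, h2, h3, h4]
  have e1 : ∑ i, hA.eigenvalues i
      = ∑ i ∈ Finset.univ.filter (fun i => hA.eigenvalues i ≠ 0), hA.eigenvalues i :=
    (Finset.sum_filter_ne_zero _).symm
  rw [e1]
  refine sq_sum_le_card_mul_sum_sq.trans ?_
  refine mul_le_mul_of_nonneg_left ?_ (Nat.cast_nonneg _)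
  exact Finset.sum_le_sum_of_subset_of_nonneg (Finset.filter_subset _ _)
    fun i _ _ => sq_nonneg _
end

section
/- There exists an absolute constant c > 0 such that for every real p with 1 ≤ p < ∞ and every n ≥ 1, every equilateral subset of ℓ_p^n has cardinality at most c · p · n^((2p+2)/(2p−1)). -/
noncomputable def apR (p : ℝ) : ℕ → ℝ
  | 0 => 1
  | k + 1 => apR p k * ((p - 2 * k) / (p + 2 * k + 2))

lemma apR_succ (p : ℝ) (k : ℕ) : apR p (k+1) = apR p k * ((p - 2 * k) / (p + 2 * k + 2)) := rfl

lemma apR_abs_le_one (p : ℝ) (hp : 1 ≤ p) (k : ℕ) : |apR p k| ≤ 1 := by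
  induction k with
  | zero => simp [apR]
  | succ k ih =>
    rw [apR_succ, abs_mul]
    have hk : (0:ℝ) ≤ k := Nat.cast_nonneg k
    have : |(p - 2 * k) / (p + 2 * k + 2)| ≤ 1 := by
      rw [abs_div, abs_of_pos (show 0 < p + 2 * k + 2 by linarith), div_le_one (by linarith), abs_le]
      constructor <;> linarith
    exact mul_le_one₀ ih (abs_nonneg _) this

lemma apR_abs_succ (p : ℝ) (hp : 1 ≤ p) (k : ℕ) (hk : p / 2 ≤ k) :
    |apR p (k+1)| * (p + 2 * k + 2) = |apR p k| * (2 * k - p) := by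
  have : 0 < p + 2 * k + 2 := by linarith
  rw [apR_succ, abs_mul, abs_div, abs_of_pos this, abs_sub_comm, abs_of_nonneg (show 0 ≤ 2 * k - p by linarith)]
  field_simp

lemma apR_bound (p : ℝ) (hp : 1 ≤ p) (k : ℕ) : |apR p k| ≤ ((p + 1) / (k + p / 2)) ^ (p + 1) := by
  induction k with
  | zero =>
    refine (apR_abs_le_one p hp 0).trans (Real.one_le_rpow ?_ (by linarith))
    rw [le_div_iff₀ (by push_cast; linarith)]; push_cast; linarith
  | succ k ih =>
    have hk0 : (0:ℝ) ≤ k := Nat.cast_nonneg k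
    rcases lt_or_ge (k:ℝ) (p/2) with hk | hk
    · refine (apR_abs_le_one p hp _).trans (Real.one_le_rpow ?_ (by linarith))
      rw [le_div_iff₀ (by push_cast; linarith)]; push_cast; linarith
    · have h1 := apR_abs_succ p hp k hk
      have hpos : 0 < p + 2 * k + 2 := by linarith
      have h2 : |apR p (k+1)| = |apR p k| * (1 + (p+1) * (-(1 / (k + p/2 + 1)))) := by
        rw [eq_comm, ← mul_left_inj' hpos.ne', h1]
        field_simp
        ring
      have hb := one_add_mul_self_le_rpow_one_add (s := -(1 / (k + p/2 + 1))) (p := p + 1)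
        (by rw [neg_le_neg_iff, div_le_one (by linarith)]; linarith) (by linarith)
      have hs0 : 0 ≤ 1 + -(1 / (k + p/2 + 1)) := by
        have : 1 / (k + p/2 + 1) ≤ 1 := by rw [div_le_one (by linarith)]; linarith
        linarith
      rw [h2]
      calc |apR p k| * (1 + (p+1) * (-(1 / (k + p/2 + 1))))
          ≤ |apR p k| * (1 + -(1 / (k + p/2 + 1))) ^ (p+1) :=
            mul_le_mul_of_nonneg_left hb (abs_nonneg _)
        _ ≤ ((p + 1) / (k + p / 2)) ^ (p + 1) * (1 + -(1 / (k + p/2 + 1))) ^ (p+1) :=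
            mul_le_mul_of_nonneg_right ih (Real.rpow_nonneg hs0 _)
        _ = _ := by
          rw [← Real.mul_rpow (by positivity) hs0]
          congr 1
          push_cast
          have : (k:ℝ) + p/2 ≠ 0 := by positivity
          have : (k:ℝ) + p/2 + 1 ≠ 0 := by positivity
          have : (k:ℝ) + 1 + p/2 ≠ 0 := by positivity
          field_simp
          ring

lemma apR_tail (p : ℝ) (hp : 1 ≤ p) (N : ℕ) (hN : p / 2 ≤ N) (K : ℕ) :
    ∑ k ∈ Finset.range K, |apR p (k + (N + 1))| ≤ |apR p N| * (2 * N - p) / (2 * p) := by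
  have key : ∑ k ∈ Finset.range K, |apR p (k + (N + 1))| =
      (|apR p N| * (2 * N - p) - |apR p (K + N)| * (2 * (K + N : ℕ) - p)) / (2 * p) := by
    induction K with
    | zero => simp
    | succ K ih =>
      have hN' : p / 2 ≤ ((K + N : ℕ) : ℝ) := by push_cast; linarith [(Nat.cast_nonneg K : (0:ℝ) ≤ K)]
      have := apR_abs_succ p hp (K+N) hN'
      rw [Finset.sum_range_succ, ih]
      rw [show K + (N+1) = K + N + 1 by ring, show K + 1 + N = K + N + 1 by ring]
      have hp0 : 2 * p ≠ 0 := by positivity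
      field_simp
      push_cast at this ⊢
      linarith
  rw [key]
  gcongr
  have : 0 ≤ |apR p (K + N)| * (2 * (K + N : ℕ) - p) :=
    mul_nonneg (abs_nonneg _) (by push_cast; linarith [(Nat.cast_nonneg K : (0:ℝ) ≤ K)])
  linarith

lemma apR_summable (p : ℝ) (hp : 1 ≤ p) : Summable (fun k => |apR p k|) := by
  obtain ⟨N, hN⟩ := exists_nat_ge (p/2)
  rw [← summable_nat_add_iff (N+1)]
  exact summable_of_sum_range_le (fun _ => abs_nonneg _) (apR_tail p hp N hN)

lemma apR_tail_bound (p : ℝ) (hp : 1 ≤ p) (N : ℕ) (hN : p ≤ N) :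
    2 * ∑' k, |apR p (k + (N + 1))| ≤ (8 * p / N) ^ p := by
  have hN2 : p / 2 ≤ N := by linarith
  have h1 := Real.tsum_le_of_sum_range_le (fun k => abs_nonneg (apR p (k + (N+1)))) (apR_tail p hp N hN2)
  have h2 := apR_bound p hp N
  have hNpos : (0:ℝ) < N := by linarith
  have h3 : ((p + 1) / (N + p / 2)) ^ (p + 1) ≤ (2 * p / N) ^ p * (2 * p / N) := by
    rw [← Real.rpow_add_one (by positivity)]
    gcongr <;> linarith
  have h4 : (4:ℝ) ≤ 4 ^ p := by
    simpa using Real.rpow_le_rpow_of_exponent_le (x := 4) (by norm_num) hp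
  calc 2 * ∑' k, |apR p (k + (N + 1))| ≤ 2 * (|apR p N| * (2 * N - p) / (2 * p)) := by gcongr
    _ ≤ 2 * (((2 * p / N) ^ p * (2 * p / N)) * (2 * N) / (2 * p)) := by
      gcongr
      · linarith
      · exact h2.trans h3
      · linarith
    _ = 4 * (2 * p / N) ^ p := by field_simp; norm_num
    _ ≤ 4 ^ p * (2 * p / N) ^ p := by gcongr
    _ = _ := by rw [← Real.mul_rpow (by norm_num) (by positivity)]; congr 1; ring
open Complex in
lemma apE_step (p : ℝ) (hp : 1 ≤ p) (n : ℤ) :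
    (p - 2 * n : ℂ) * (∫ θ in (-(Real.pi/2))..(Real.pi/2), exp (-(2 * n * I * θ)) * ((Real.cos θ ^ p : ℝ) : ℂ)) =
    (p + 2 * n + 2 : ℂ) * (∫ θ in (-(Real.pi/2))..(Real.pi/2), exp (-(2 * (n+1) * I * θ)) * ((Real.cos θ ^ p : ℝ) : ℂ)) := by
  have hc : Continuous (fun θ : ℝ => ((Real.cos θ ^ p : ℝ) : ℂ)) :=
    continuous_ofReal.comp (Real.continuous_cos.rpow_const (fun _ => Or.inr (by linarith)))
  have hG : ∀ θ : ℝ, HasDerivAt (fun θ : ℝ => ((Real.cos θ ^ (p+1) : ℝ) : ℂ) * exp (-((2 * n + 1) * I * θ)))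
      ((I/2) * ((p - 2 * n : ℂ) * (exp (-(2 * n * I * θ)) * ((Real.cos θ ^ p : ℝ) : ℂ))
        - (p + 2 * n + 2 : ℂ) * (exp (-(2 * (n+1) * I * θ)) * ((Real.cos θ ^ p : ℝ) : ℂ)))) θ := by
    intro θ
    have h1 := ((Real.hasDerivAt_cos θ).rpow_const (p := p + 1) (Or.inr (by linarith))).ofReal_comp
    have h2 : HasDerivAt (fun θ : ℝ => exp (-((2 * n + 1) * I * θ)))
        (exp (-((2 * n + 1) * I * θ)) * (-((2 * n + 1) * I * 1))) θ := by
      apply HasDerivAt.cexp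
      apply HasDerivAt.neg
      apply HasDerivAt.const_mul
      exact (hasDerivAt_id θ).ofReal_comp
    refine (h1.mul h2).congr_deriv ?_
    have hcc : ((Real.cos θ ^ (p+1) : ℝ) : ℂ) = ((Real.cos θ ^ p : ℝ) : ℂ) * ((exp (θ * I) + exp (-θ * I)) / 2) := by
      have : Real.cos θ ^ (p+1) = Real.cos θ ^ p * Real.cos θ := by
        rcases eq_or_ne (Real.cos θ) 0 with h | h
        · rw [h, Real.zero_rpow (by linarith)]; simp
        · exact Real.rpow_add_one h p
      rw [this, ofReal_mul, ofReal_cos]; rfl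
    have hss : ((Real.sin θ : ℝ) : ℂ) = (exp (-θ * I) - exp (θ * I)) * I / 2 := by
      rw [ofReal_sin]; rfl
    have e1 : exp (-(2 * n * I * θ)) = exp (-((2 * n + 1) * I * θ)) * exp (θ * I) := by
      rw [← exp_add]; congr 1; ring
    have e2 : exp (-(2 * (n+1) * I * θ)) = exp (-((2 * n + 1) * I * θ)) * exp (-θ * I) := by
      rw [← exp_add]; congr 1; ring
    rw [hcc, e1, e2, add_sub_cancel_right]
    simp only [ofReal_mul, ofReal_neg, hss, ofReal_add, ofReal_one]
    ring
  have i1 : ∀ m : ℂ, Continuous (fun θ : ℝ => exp (-(m * I * θ)) * ((Real.cos θ ^ p : ℝ) : ℂ)) :=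
    fun m => Continuous.mul (by fun_prop) hc
  have i2 : ∀ a m : ℂ, Continuous (fun θ : ℝ => a * (exp (-(m * I * θ)) * ((Real.cos θ ^ p : ℝ) : ℂ))) :=
    fun a m => continuous_const.mul (i1 m)
  have hint := intervalIntegral.integral_eq_sub_of_hasDerivAt (a := -(Real.pi/2)) (b := Real.pi/2) (fun θ _ => hG θ)
    (Continuous.intervalIntegrable (by
      exact continuous_const.mul ((continuous_const.mul (i1 _)).sub (continuous_const.mul (i1 _)))) _ _)
  rw [intervalIntegral.integral_const_mul, intervalIntegral.integral_sub
    ((i2 _ _).intervalIntegrable _ _) ((i2 _ _).intervalIntegrable _ _),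
    intervalIntegral.integral_const_mul, intervalIntegral.integral_const_mul, Real.cos_neg, Real.cos_pi_div_two,
    Real.zero_rpow (by linarith)] at hint
  simp only [ofReal_zero, zero_mul, sub_zero, mul_eq_zero, div_eq_zero_iff, I_ne_zero, OfNat.ofNat_ne_zero, or_self, false_or] at hint
  exact sub_eq_zero.mp hint

lemma ap_rank {ι : Type*} [Fintype ι] (A : ι → EuclideanSpace ℝ ι) (V : Submodule ℝ (EuclideanSpace ℝ ι))
    (hA : ∀ j, A j ∈ V) :
    (∑ j, A j j) ^ 2 ≤ (Module.finrank ℝ V) * ∑ j, ∑ i, (A j i) ^ 2 := by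
  let b := stdOrthonormalBasis ℝ V
  have h1 : ∀ j, A j j = ∑ l, inner ℝ (b l : EuclideanSpace ℝ ι) (A j) * (b l : EuclideanSpace ℝ ι) j := by
    intro j
    have := b.sum_repr' ⟨A j, hA j⟩
    have := congrArg (fun v : V => (v : EuclideanSpace ℝ ι) j) this
    simp only [] at this
    rw [← this]
    simp
  have h2 : ∀ j, ∑ i, (A j i) ^ 2 = ∑ l, (inner ℝ (b l : EuclideanSpace ℝ ι) (A j)) ^ 2 := by
    intro j
    have := b.sum_sq_norm_inner_right ⟨A j, hA j⟩
    simp only [Submodule.coe_inner, Real.norm_eq_abs, sq_abs, Submodule.coe_norm] at this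
    rw [this, EuclideanSpace.norm_sq_eq]
    simp
  have h3 : ∑ j, ∑ l, ((b l : EuclideanSpace ℝ ι) j) ^ 2 = Module.finrank ℝ V := by
    rw [Finset.sum_comm]
    have : ∀ l, ∑ j, ((b l : EuclideanSpace ℝ ι) j) ^ 2 = 1 := by
      intro l
      have h := b.orthonormal.1 l
      have h' := EuclideanSpace.norm_sq_eq (b l : EuclideanSpace ℝ ι)
      rw [← Submodule.coe_norm, h] at h'
      simpa using h'.symm
    simp [this]
  simp_rw [h1, h2]
  rw [← h3, mul_comm]
  simp_rw [← Finset.sum_product']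
  exact Finset.sum_mul_sq_le_sq_mul_sq _ _ _

open Polynomial in
lemma ap_span {ι : Type*} [Fintype ι] (n : ℕ) (hn : 1 ≤ n) (D : ℕ) (P : ℝ[X]) (hP : P.natDegree ≤ D)
    (x : ι → Fin n → ℝ) :
    ∃ V : Submodule ℝ (EuclideanSpace ℝ ι), Module.finrank ℝ V ≤ n * (D + 1) ∧
      ∀ j, WithLp.toLp 2 (fun i => 1 - ∑ k, P.eval (x i k - x j k)) ∈ V := by
  let g : Fin n × Fin (D+1) → EuclideanSpace ℝ ι := fun q => WithLp.toLp 2 (fun i => x i q.1 ^ (q.2 : ℕ))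
  refine ⟨Submodule.span ℝ (Set.range g), ?_, ?_⟩
  · have := finrank_range_le_card (R := ℝ) g
    simpa [Set.finrank] using this
  · intro j
    have h0 : WithLp.toLp 2 (fun i => 1 - ∑ k, P.eval (x i k - x j k)) =
        g (⟨0, hn⟩, 0) - ∑ k, ∑ l : Fin (D+1), (P.comp (X - C (x j k))).coeff l • g (k, l) := by
      ext i
      simp only [g, Fin.val_zero, pow_zero, PiLp.sub_apply, WithLp.ofLp_sum, Finset.sum_apply, PiLp.smul_apply, smul_eq_mul]
      congr 1
      refine Finset.sum_congr rfl fun k _ => ?_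
      have hd : (P.comp (X - C (x j k))).natDegree < D + 1 := by
        refine lt_of_le_of_lt natDegree_comp_le ?_
        rw [natDegree_X_sub_C]; omega
      have := eval_eq_sum_range' hd (x i k)
      rw [eval_comp] at this
      simp only [eval_sub, eval_X, eval_C] at this
      rw [this, Finset.sum_range]
    rw [h0]
    refine Submodule.sub_mem _ (Submodule.subset_span ⟨_, rfl⟩) (Submodule.sum_mem _ fun k _ => Submodule.sum_mem _ fun l _ =>
      Submodule.smul_mem _ _ (Submodule.subset_span ⟨_, rfl⟩))


lemma ap_coef (p : ℝ) (hp : 1 ≤ p) (c : ℤ → ℂ)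
    (hc : ∀ n : ℤ, (p - 2 * n : ℂ) * c n = (p + 2 * n + 2 : ℂ) * c (n+1)) (k : ℕ) :
    c k = c 0 * (apR p k : ℂ) ∧ c (-k) = c 0 * (apR p k : ℂ) := by
  induction k with
  | zero => simp [apR]
  | succ k ih =>
    have hne : (p + 2 * k + 2 : ℂ) ≠ 0 := by
      have : (0:ℝ) < p + 2 * k + 2 := by positivity
      exact_mod_cast this.ne'
    rw [apR_succ]
    push_cast
    constructor
    · have := hc k
      rw [ih.1] at this
      push_cast at this
      rw [← mul_right_inj' hne, ← this]
      field_simp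
    · have := hc (-(k+1))
      rw [show (-((k:ℤ)+1) + 1) = -(k:ℤ) by ring, ih.2] at this
      push_cast at this
      rw [← mul_right_inj' hne]
      have h2 : (p + 2 * k + 2 : ℂ) * c (-(k+1)) = (p - 2 * k) * (c 0 * apR p k) := by
        linear_combination this
      rw [h2]
      field_simp

open Complex in
lemma ap_fourier (p : ℝ) (hp : 1 ≤ p) : ∃ a : ℝ, |a| ≤ 1 ∧ ∀ θ : ℝ,
    HasSum (fun k : ℕ => 2 * a * apR p k * Real.cos (2 * k * θ)) (|Real.cos θ| ^ p + a) := by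
  have : Fact (0 < Real.pi) := ⟨Real.pi_pos⟩
  have hper : Function.Periodic (fun θ : ℝ => ((|Real.cos θ| ^ p : ℝ) : ℂ)) Real.pi := by
    intro θ; simp [Real.cos_add_pi]
  have hcont : Continuous (fun θ : ℝ => ((|Real.cos θ| ^ p : ℝ) : ℂ)) :=
    continuous_ofReal.comp (Real.continuous_cos.abs.rpow_const (fun _ => Or.inr (by linarith)))
  let f : C(AddCircle Real.pi, ℂ) := ⟨hper.lift, continuous_coinduced_dom.mpr hcont⟩
  have hf : ∀ θ : ℝ, f (θ : AddCircle Real.pi) = ((|Real.cos θ| ^ p : ℝ) : ℂ) := fun θ => rfl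
  have hpi : (Real.pi : ℂ) ≠ 0 := by exact_mod_cast Real.pi_ne_zero
  have hfc : ∀ n : ℤ, fourierCoeff f n = (1 / Real.pi : ℝ) *
      ∫ θ in (-(Real.pi/2))..(Real.pi/2), exp (-(2 * n * I * θ)) * ((Real.cos θ ^ p : ℝ) : ℂ) := by
    intro n
    rw [fourierCoeff_eq_intervalIntegral f n (-(Real.pi/2)), show -(Real.pi/2) + Real.pi = Real.pi/2 by ring, real_smul]
    congr 1
    apply intervalIntegral.integral_congr
    intro θ hθ
    rw [Set.uIcc_of_le (by linarith [Real.pi_pos])] at hθ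
    simp only [smul_eq_mul]
    rw [fourier_coe_apply, hf, abs_of_nonneg (Real.cos_nonneg_of_mem_Icc hθ)]
    congr 2
    push_cast
    field_simp
  have hrec : ∀ n : ℤ, (p - 2 * n : ℂ) * fourierCoeff f n = (p + 2 * n + 2 : ℂ) * fourierCoeff f (n+1) := by
    intro n
    rw [hfc, hfc]
    have := apE_step p hp n
    push_cast at this ⊢
    linear_combination (1 / (Real.pi:ℂ)) * this
  have hco := ap_coef p hp (fourierCoeff f) hrec
  let J : ℝ := ∫ θ in (-(Real.pi/2))..(Real.pi/2), Real.cos θ ^ p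
  have h0 : fourierCoeff f 0 = ((1 / Real.pi * J : ℝ) : ℂ) := by
    rw [hfc, ofReal_mul]
    congr 1
    simp only [J, ← intervalIntegral.integral_ofReal]
    simp
  have hJ : ‖J‖ ≤ 1 * |Real.pi/2 - -(Real.pi/2)| := by
    apply intervalIntegral.norm_integral_le_of_norm_le_const
    intro θ hθ
    rw [Set.uIoc_of_le (by linarith [Real.pi_pos])] at hθ
    have hc0 := Real.cos_nonneg_of_mem_Icc ⟨hθ.1.le, hθ.2⟩
    rw [Real.norm_of_nonneg (Real.rpow_nonneg hc0 _)]
    exact Real.rpow_le_one hc0 (Real.cos_le_one _) (by linarith)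
  refine ⟨1 / Real.pi * J, ?_, ?_⟩
  · rw [abs_mul, abs_of_pos (by positivity)]
    rw [show Real.pi/2 - -(Real.pi/2) = Real.pi by ring, abs_of_pos Real.pi_pos, one_mul, Real.norm_eq_abs] at hJ
    rw [one_div, inv_mul_le_iff₀ Real.pi_pos]; simpa using hJ
  · intro θ
    generalize 1 / Real.pi * J = a at h0
    have hs : Summable (fourierCoeff f) := by
      have hn : Summable (fun k : ℕ => (a:ℂ) * (apR p k : ℂ)) := by
        apply Summable.mul_left
        exact Summable.of_norm (by simpa using apR_summable p hp)
      apply Summable.of_nat_of_neg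
      · refine hn.congr fun k => ?_
        rw [(hco k).1, h0]
      · refine hn.congr fun k => ?_
        rw [(hco k).2, h0]
    have h := (has_pointwise_sum_fourier_series_of_summable hs (θ : AddCircle Real.pi)).nat_add_neg
    have h' := Complex.hasSum_re h
    convert! h' using 1
    · funext k
      rw [(hco k).1, (hco k).2, h0, fourier_coe_apply, fourier_coe_apply]
      have e1 : (2 * Real.pi * I * ((k:ℤ):ℂ) * θ / Real.pi : ℂ) = ((2 * k * θ : ℝ) : ℂ) * I := by
        push_cast; field_simp
      have e2 : (2 * Real.pi * I * ((-(k:ℤ) : ℤ):ℂ) * θ / Real.pi : ℂ) = ((-(2 * k * θ) : ℝ) : ℂ) * I := by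
        push_cast; field_simp
      rw [e1, e2]
      simp only [smul_eq_mul, ← ofReal_mul, add_re, re_ofReal_mul, exp_ofReal_mul_I_re, Real.cos_neg]
      ring
    · rw [hf, h0]; simp

open Polynomial in
lemma ap_approx (p : ℝ) (hp : 1 ≤ p) (N : ℕ) (hN : 1 ≤ N) :
    ∃ P : ℝ[X], P.natDegree ≤ 2 * N ∧ ∀ t : ℝ, |t| ≤ 1 → |(|t| ^ p - P.eval t)| ≤ (8 * p / N) ^ p := by
  have hN0 : (0:ℝ) < N := by exact_mod_cast hN
  rcases lt_or_ge (N:ℝ) p with h | h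
  · refine ⟨0, by simp, fun t ht => ?_⟩
    have h1 : |t| ^ p ≤ 1 := Real.rpow_le_one (abs_nonneg _) ht (by linarith)
    have h2 : 1 ≤ (8 * p / N) ^ p := Real.one_le_rpow (by rw [le_div_iff₀ hN0]; linarith) (by linarith)
    simp only [eval_zero, sub_zero]
    rw [abs_of_nonneg (Real.rpow_nonneg (abs_nonneg _) _)]
    linarith
  · obtain ⟨a, ha, hsum⟩ := ap_fourier p hp
    refine ⟨∑ k ∈ Finset.range (N+1), C (2 * a * apR p k) * Chebyshev.T ℝ ((2 * k : ℕ) : ℤ) - C a, ?_, ?_⟩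
    · rw [natDegree_sub_C]
      apply natDegree_sum_le_of_forall_le
      intro k hk
      refine (natDegree_C_mul_le _ _).trans ?_
      rw [Chebyshev.natDegree_T]
      simp only [Finset.mem_range] at hk
      simp only [Int.natAbs_natCast]; omega
    · intro t ht
      obtain ⟨θ, rfl⟩ : ∃ θ, Real.cos θ = t := ⟨Real.arccos t, Real.cos_arccos (abs_le.mp ht).1 (abs_le.mp ht).2⟩
      have hs := hsum θ
      have e : |Real.cos θ| ^ p - (∑ k ∈ Finset.range (N+1), C (2 * a * apR p k) * Chebyshev.T ℝ ((2 * k : ℕ) : ℤ) - C a).eval (Real.cos θ)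
          = ∑' k : ℕ, 2 * a * apR p (k + (N+1)) * Real.cos (2 * (k + (N+1) : ℕ) * θ) := by
        have h1 := hs.summable.sum_add_tsum_nat_add (N+1)
        rw [hs.tsum_eq] at h1
        have h2 : (∑ k ∈ Finset.range (N+1), C (2 * a * apR p k) * Chebyshev.T ℝ ((2 * k : ℕ) : ℤ) - C a).eval (Real.cos θ)
            = ∑ k ∈ Finset.range (N+1), 2 * a * apR p k * Real.cos (2 * k * θ) - a := by
          rw [eval_sub, eval_finsetSum, eval_C]
          congr 1
          refine Finset.sum_congr rfl fun k _ => ?_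
          rw [eval_mul, eval_C, Chebyshev.T_real_cos]
          push_cast; rfl
        rw [h2]; linarith
      rw [e]
      have hsm : Summable (fun k => |apR p (k + (N+1))|) := (summable_nat_add_iff (f := fun k => |apR p k|) (N+1)).mpr (apR_summable p hp)
      refine le_trans ?_ (apR_tail_bound p hp N h)
      rw [← tsum_mul_left]
      rw [← Real.norm_eq_abs]
      refine tsum_of_norm_bounded (hsm.mul_left 2).hasSum ?_
      intro k
      rw [Real.norm_eq_abs, abs_mul, abs_mul, abs_mul, abs_two]
      have hc := Real.abs_cos_le_one (2 * (k + (N+1) : ℕ) * θ)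
      calc 2 * |a| * |apR p (k + (N+1))| * |Real.cos (2 * (k + (N+1) : ℕ) * θ)|
          ≤ 2 * 1 * |apR p (k + (N+1))| * 1 := by gcongr
        _ = _ := by ring

lemma ap_calc (p : ℝ) (hp : 1 ≤ p) (m n : ℝ) (hm : 1 ≤ m) (hn : 1 ≤ n) (K : ℝ) (hK : 1 ≤ K)
    (h : m ≤ K * p * n * (n * √m) ^ (1 / p)) :
    m ≤ (2 * K ^ 2) * p * n ^ ((2 * p + 2) / (2 * p - 1)) := by
  have hq : 0 < 2 * p - 1 := by linarith
  have hq1 : 1 ≤ 2 * p - 1 := by linarith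
  have hp0 : 0 < p := by linarith
  have hm0 : 0 < m := by linarith
  have hn0 : 0 < n := by linarith
  have h1 : m ^ ((2 * p - 1) / (2 * p)) ≤ (K * p) * n ^ ((p + 1) / p) := by
    have e : (2 * p - 1) / (2 * p) = 1 - 1 / (2 * p) := by field_simp
    rw [e, Real.rpow_sub hm0, Real.rpow_one, div_le_iff₀ (by positivity)]
    refine h.trans (le_of_eq ?_)
    rw [Real.mul_rpow (by positivity) (by positivity), Real.sqrt_eq_rpow, ← Real.rpow_mul hm0.le,
      show (p + 1) / p = 1 + 1 / p by field_simp, Real.rpow_add hn0, Real.rpow_one,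
      show (1:ℝ) / 2 * (1 / p) = 1 / (2 * p) by field_simp]
    ring
  have h2 := Real.rpow_le_rpow (by positivity) h1 (show 0 ≤ 2 * p / (2 * p - 1) by positivity)
  rw [← Real.rpow_mul hm0.le, show (2 * p - 1) / (2 * p) * (2 * p / (2 * p - 1)) = 1 by field_simp,
    Real.rpow_one, Real.mul_rpow (by positivity) (by positivity), ← Real.rpow_mul hn0.le,
    show (p + 1) / p * (2 * p / (2 * p - 1)) = (2 * p + 2) / (2 * p - 1) by field_simp] at h2
  refine h2.trans ?_
  gcongr
  rw [show 2 * p / (2 * p - 1) = 1 + 1 / (2 * p - 1) by field_simp; ring, Real.rpow_add (by positivity), Real.rpow_one,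
    Real.mul_rpow (by positivity) (by positivity)]
  have h3 : K ^ (1 / (2 * p - 1)) ≤ K := by
    have := Real.rpow_le_rpow_of_exponent_le hK (show 1 / (2 * p - 1) ≤ 1 by rw [div_le_one hq]; exact hq1)
    simpa using this
  have h4 : p ^ (1 / (2 * p - 1)) ≤ 2 := by
    rw [one_div, Real.rpow_inv_le_iff_of_pos hp0.le (by norm_num) hq]
    have := one_add_mul_self_le_rpow_one_add (s := 1) (by norm_num) hq1
    norm_num at this
    linarith
  calc K * p * (K ^ (1 / (2 * p - 1)) * p ^ (1 / (2 * p - 1))) ≤ K * p * (K * 2) := by gcongr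
    _ = _ := by ring

lemma ap_main (p : ℝ) (hp : 1 ≤ p) (n : ℕ) (hn : 1 ≤ n) {ι : Type*} [Fintype ι] [Nonempty ι]
    (x : ι → Fin n → ℝ) (hx : ∀ i j, i ≠ j → ∑ k, |x i k - x j k| ^ p = 1) :
    (Fintype.card ι : ℝ) ≤ 540 * p * n * (n * √(Fintype.card ι)) ^ (1 / p) := by
  classical
  set m : ℝ := (Fintype.card ι : ℝ) with hm
  have hm1 : 1 ≤ m := by rw [hm]; exact_mod_cast Fintype.card_pos
  have hn1 : (1:ℝ) ≤ n := by exact_mod_cast hn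
  have hp0 : 0 < p := by linarith
  have hsm : 1 ≤ √m := Real.one_le_sqrt.mpr hm1
  have hsq : √m ^ 2 = m := Real.sq_sqrt (by linarith)
  set R : ℝ := (2 * (n * √m)) ^ (1/p) with hR
  have hnm : 1 ≤ n * √m := one_le_mul_of_one_le_of_one_le hn1 hsm
  have hR1 : 1 ≤ R := Real.one_le_rpow (by linarith) (by positivity)
  set N : ℕ := ⌈8 * p * R⌉₊ with hN
  have hpR : 1 ≤ p * R := one_le_mul_of_one_le_of_one_le hp hR1
  have hNle : 8 * p * R ≤ N := Nat.le_ceil _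
  have hNlt : (N:ℝ) < 8 * p * R + 1 := Nat.ceil_lt_add_one (by positivity)
  have hN1 : 1 ≤ N := by
    have : (1:ℝ) ≤ N := by linarith
    exact_mod_cast this
  obtain ⟨P, hPd, hP⟩ := ap_approx p hp N hN1
  set ε : ℝ := (8 * p / N) ^ p with hε
  have hε1 : n * ε ≤ 1 / (2 * √m) := by
    have h1 : ε ≤ (1 / R) ^ p := by
      rw [hε]
      refine Real.rpow_le_rpow (by positivity) ?_ hp0.le
      rw [div_le_div_iff₀ (by positivity) (by positivity)]
      linarith
    have h2 : (1 / R) ^ p = 1 / (2 * (n * √m)) := by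
      rw [Real.div_rpow (by norm_num) (by positivity), hR, ← Real.rpow_mul (by positivity)]
      rw [show 1 / p * p = 1 by field_simp]; simp
    rw [h2] at h1
    calc n * ε ≤ n * (1 / (2 * (n * √m))) := by gcongr
      _ = _ := by field_simp
  have hε2 : 1 / (2 * √m) ≤ 1 / 2 := by
    apply one_div_le_one_div_of_le <;> linarith
  have hbd : ∀ i j, ∀ k, |x i k - x j k| ≤ 1 := by
    intro i j k
    rcases eq_or_ne i j with h | h
    · simp [h]
    · have h1 := hx i j h
      have h2 := Finset.single_le_sum (f := fun k => |x i k - x j k| ^ p) (fun k _ => Real.rpow_nonneg (abs_nonneg _) _) (Finset.mem_univ k)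
      rw [h1] at h2
      by_contra hc
      push Not at hc
      exact absurd (Real.one_lt_rpow hc hp0) (not_lt.mpr h2)
  have happ : ∀ i j, |∑ k, |x i k - x j k| ^ p - ∑ k, P.eval (x i k - x j k)| ≤ 1 / (2 * √m) := by
    intro i j
    rw [← Finset.sum_sub_distrib]
    refine (Finset.abs_sum_le_sum_abs _ _).trans ?_
    refine (Finset.sum_le_card_nsmul _ _ ε fun k _ => hP _ (hbd i j k)).trans ?_
    simpa using hε1
  obtain ⟨V, hV, hVm⟩ := ap_span n hn (2 * N) P hPd x
  have hrk := ap_rank _ V hVm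
  simp only [] at hrk
  have hdiag : ∀ j, |∑ k, P.eval (x j k - x j k)| ≤ 1 / (2 * √m) := by
    intro j
    have := happ j j
    simpa [Real.zero_rpow hp0.ne'] using this
  have htr : m / 2 ≤ ∑ j, (1 - ∑ k, P.eval (x j k - x j k)) := by
    have : ∑ j : ι, (1/2 : ℝ) ≤ ∑ j, (1 - ∑ k, P.eval (x j k - x j k)) := by
      refine Finset.sum_le_sum fun j _ => ?_
      have := (abs_le.mp (hdiag j)).2
      linarith
    simp only [Finset.sum_const, Finset.card_univ, nsmul_eq_mul] at this
    linarith
  have hent : ∀ i j, (1 - ∑ k, P.eval (x i k - x j k)) ^ 2 ≤ (if i = j then 9/4 else 0) + 1 / (4 * m) := by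
    intro i j
    have hpos : 0 < 1 / (4 * m) := by positivity
    split_ifs with h
    · subst h
      have := abs_le.mp (hdiag i)
      have h3 : (1 - ∑ k, P.eval (x i k - x i k)) ^ 2 ≤ (3/2) ^ 2 := by
        apply sq_le_sq' <;> linarith
      linarith
    · have := happ i j
      rw [hx i j h] at this
      have h3 : (1 - ∑ k, P.eval (x i k - x j k)) ^ 2 ≤ (1 / (2 * √m)) ^ 2 := by
        rw [← sq_abs]; gcongr
      have h4 : (1 / (2 * √m)) ^ 2 = 1 / (4 * m) := by
        rw [div_pow, mul_pow, hsq]; norm_num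
      linarith
  have hfro : ∑ j, ∑ i, (1 - ∑ k, P.eval (x i k - x j k)) ^ 2 ≤ 5 / 2 * m := by
    calc _ ≤ ∑ j : ι, ∑ i : ι, ((if i = j then 9/4 else 0) + 1 / (4 * m)) :=
          Finset.sum_le_sum fun j _ => Finset.sum_le_sum fun i _ => hent i j
      _ = 5 / 2 * m := by
        simp only [Finset.sum_add_distrib, Finset.sum_ite_eq', Finset.mem_univ, if_true, Finset.sum_const,
          Finset.card_univ, nsmul_eq_mul, ← hm]
        field_simp
        norm_num
  have hV' : (Module.finrank ℝ V : ℝ) ≤ n * (2 * N + 1) := by exact_mod_cast hV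
  have hfin : (m / 2) ^ 2 ≤ n * (2 * N + 1) * (5 / 2 * m) := by
    calc (m/2) ^ 2 ≤ (∑ j, (1 - ∑ k, P.eval (x j k - x j k))) ^ 2 := by gcongr
      _ ≤ _ := hrk
      _ ≤ _ := by gcongr
  have hm10 : m ≤ 10 * n * (2 * N + 1) := by
    by_contra hc
    push Not at hc
    nlinarith
  have hR2 : R ≤ 2 * (n * √m) ^ (1/p) := by
    rw [hR, Real.mul_rpow (by norm_num) (by positivity)]
    gcongr
    have := Real.rpow_le_rpow_of_exponent_le (x := 2) (by norm_num) (show 1 / p ≤ 1 by rw [div_le_one hp0]; exact hp)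
    simpa using this
  calc m ≤ 10 * n * (2 * N + 1) := hm10
    _ ≤ 10 * n * (27 * (p * R)) := by gcongr; linarith
    _ ≤ 10 * n * (27 * (p * (2 * (n * √m) ^ (1/p)))) := by gcongr
    _ = _ := by ring

theorem alon_pudlak_lp_bound :
    ∃ c : ℝ, 0 < c ∧ ∀ (p : ℝ), 1 ≤ p → ∀ (n : ℕ), 1 ≤ n →
      ∀ S : Finset (PiLp (ENNReal.ofReal p) (fun _ : Fin n => ℝ)),
        (∃ lam : ℝ, 0 < lam ∧ ∀ x ∈ S, ∀ y ∈ S, x ≠ y → ‖x - y‖ = lam) →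
        (S.card : ℝ) ≤ c * p * (n : ℝ) ^ ((2 * p + 2) / (2 * p - 1)) := by
  refine ⟨2 * 540 ^ 2, by norm_num, ?_⟩
  intro p hp n hn S ⟨lam, hlam, hS⟩
  have hp0 : 0 < p := by linarith
  rcases S.eq_empty_or_nonempty with h | h
  · rw [h]; simp; positivity
  have : Nonempty S := h.to_subtype
  have htr : (ENNReal.ofReal p).toReal = p := ENNReal.toReal_ofReal hp0.le
  have := ap_main p hp n hn (ι := S) (fun i k => (i : PiLp (ENNReal.ofReal p) (fun _ : Fin n => ℝ)) k / lam) (by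
    intro i j hij
    have h1 := hS i i.2 j j.2 (fun h => hij (Subtype.ext h))
    rw [PiLp.norm_eq_sum (by rw [htr]; exact hp0), htr] at h1
    simp only [PiLp.sub_apply, Real.norm_eq_abs] at h1
    simp only [← sub_div, abs_div, abs_of_pos hlam]
    simp_rw [Real.div_rpow (abs_nonneg _) hlam.le]
    rw [← Finset.sum_div, ← h1, ← Real.rpow_mul (Finset.sum_nonneg fun k _ => Real.rpow_nonneg (abs_nonneg _) _),
      one_div_mul_cancel hp0.ne', Real.rpow_one]
    refine div_self fun h0 => ?_
    rw [h0, Real.zero_rpow (by positivity)] at h1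
    exact hlam.ne h1)
  rw [Fintype.card_coe] at this
  refine ap_calc p hp _ n ?_ (by exact_mod_cast hn) 540 (by norm_num) this
  exact_mod_cast h.card_pos
end
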